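/- arXiv:math/0007075 — 6 statements merged into one kernel-verified Lean document; each statement's English description precedes it below -/
import Mathlib

section
/- Let p and q be coprime real polynomials in two variables, neither of them zero. Then the set of common zeros {v ∈ ℝ² : p(v) = 0 and q(v) = 0} is finite. -/
open MvPolynomial Filter Topology

/-- Evaluation of a two-variable real polynomial at a point of `ℝ²`. -/
noncomputable def pev (p : MvPolynomial (Fin 2) ℝ) (v : ℝ × ℝ) : ℝ :=
  MvPolynomial.eval ![v.1, v.2] p

/-!
By Gauss's lemma, coprime elements of `A[X]`, with `A` a unique factorization domain, stay coprime
over the fraction field `K` of `A`. Since `K[X]` is a principal ideal domain they satisfy a Bézout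
identity there, and clearing its denominators puts a nonzero constant of `A` in the ideal they
generate. Applied to `R[x, y]` as `R[y][x]` and as `R[x][y]`, this gives nonzero one-variable
polynomials in `x` and in `y` that vanish at every common zero, so each coordinate takes finitely
many values.
-/

section FractionField

variable {R K : Type*} [CommRing R] [IsDomain R] [Field K] [Algebra R K] [IsFractionRing R K]

theorem exists_isPrimitive_associated_map [IsGCDMonoid R] {d : Polynomial K} (hd : d ≠ 0) :
    ∃ g : Polynomial R, g.IsPrimitive ∧ Associated (g.map (algebraMap R K)) d := by
  let : NormalizedGCDMonoid R := Nonempty.some inferInstance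
  let g := IsLocalization.integerNormalization (nonZeroDivisors R) d
  obtain ⟨b, hb, hbd⟩ := IsLocalization.integerNormalization_spec (nonZeroDivisors R) d
  have isUnit_C {a : R} (ha : a ≠ 0) : IsUnit (Polynomial.C (algebraMap R K a)) :=
    Polynomial.isUnit_C.2 (by simpa using ha)
  have content_ne_zero : g.content ≠ 0 := by
    rwa [Ne, Polynomial.content_eq_zero_iff, IsFractionRing.integerNormalization_eq_zero_iff]
  have key : Polynomial.C (algebraMap R K g.content) * g.primPart.map (algebraMap R K) =
      Polynomial.C (algebraMap R K b) * d := by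
    rw [← Polynomial.map_C, ← Polynomial.map_mul, ← g.eq_C_content_mul_primPart, hbd,
      Algebra.smul_def, Polynomial.algebraMap_apply]
  refine ⟨g.primPart, g.isPrimitive_primPart, ?_⟩
  rw [← associated_isUnit_mul_left_iff (isUnit_C content_ne_zero), key]
  exact associated_unit_mul_left _ _ (isUnit_C (nonZeroDivisors.ne_zero hb))

theorem isRelPrime_map_algebraMap [IsGCDMonoid R] {f g : Polynomial R} (hfg : IsRelPrime f g) :
    IsRelPrime (f.map (algebraMap R K)) (g.map (algebraMap R K)) := by
  intro d hdf hdg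
  have hd : d ≠ 0 := by
    rintro rfl
    simp only [zero_dvd_iff, Polynomial.map_eq_zero_iff (IsFractionRing.injective R K)] at hdf hdg
    exact hfg.ne_zero_or_ne_zero.elim (· hdf) (· hdg)
  obtain ⟨c, hc, hcd⟩ := exists_isPrimitive_associated_map (R := R) hd
  have hcf : c ∣ f := hc.dvd_of_fraction_map_dvd_fraction_map (hcd.dvd.trans hdf)
  have hcg : c ∣ g := hc.dvd_of_fraction_map_dvd_fraction_map (hcd.dvd.trans hdg)
  exact hcd.isUnit_iff.1 (hc.isUnit_iff_isUnit_map.1 (hfg hcf hcg))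

end FractionField

attribute [local instance] Polynomial.algebra in
theorem exists_C_mem_span_pair {R : Type*} [CommRing R] [IsDomain R] [IsGCDMonoid R]
    {f g : Polynomial R} (hfg : IsRelPrime f g) :
    ∃ r : R, r ≠ 0 ∧ Polynomial.C r ∈ Ideal.span {f, g} := by
  let K := FractionRing R
  have := Polynomial.isLocalization (nonZeroDivisors R) K
  have map_eq_top : (Ideal.span {f, g}).map (algebraMap (Polynomial R) (Polynomial K)) = ⊤ := by
    rw [Ideal.map_span, Set.image_pair, Ideal.span_insert, Ideal.sup_eq_top_iff_isCoprime]
    exact (isRelPrime_map_algebraMap hfg).isCoprime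
  have not_disjoint := mt (IsLocalization.map_algebraMap_ne_top_iff_disjoint
    ((nonZeroDivisors R).map Polynomial.C) (Polynomial K) _).2 (not_not.2 map_eq_top)
  obtain ⟨_, ⟨r, hr, rfl⟩, hmem⟩ := Set.not_disjoint_iff.1 not_disjoint
  exact ⟨r, nonZeroDivisors.ne_zero hr, hmem⟩

section Elimination

variable {R : Type*} [CommRing R] [IsDomain R] [UniqueFactorizationMonoid R]

theorem exists_rename_mem_span_pair {σ : Type*} {p q : MvPolynomial σ R} (hpq : IsRelPrime p q)
    (i : σ) :
    ∃ r : MvPolynomial {j // j ≠ i} R, r ≠ 0 ∧ rename (↑) r ∈ Ideal.span {p, q} := by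
  classical
  let e := (renameEquiv R (Equiv.optionSubtypeNe i).symm).trans (optionEquivLeft R {j // j ≠ i})
  have e_rename (r : MvPolynomial {j // j ≠ i} R) : e (rename (↑) r) = Polynomial.C r := by
    have : e.toAlgHom.comp (rename (↑)) = Polynomial.CAlgHom := algHom_ext fun j => by simp [e, j.2]
    exact DFunLike.congr_fun this r
  have relPrime : IsRelPrime (e p) (e q) := IsRelPrime.of_map e.symm (by simpa using hpq)
  obtain ⟨r, hr, hmem⟩ := exists_C_mem_span_pair relPrime
  rw [← Set.image_pair, ← Ideal.map_span, Ideal.mem_map_of_equiv] at hmem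
  obtain ⟨s, hs, hsr⟩ := hmem
  exact ⟨r, hr, e.injective (hsr.trans (e_rename r).symm) ▸ hs⟩

theorem exists_aeval_X_mem_span_pair {p q : MvPolynomial (Fin 2) R} (hpq : IsRelPrime p q)
    (i : Fin 2) :
    ∃ u : Polynomial R, u ≠ 0 ∧ Polynomial.aeval (X i) u ∈ Ideal.span {p, q} := by
  let : Unique {j : Fin 2 // j ≠ i.rev} :=
    { default := ⟨i, by decide +revert⟩
      uniq := by decide +revert }
  obtain ⟨r, hr, hmem⟩ := exists_rename_mem_span_pair hpq i.rev
  obtain ⟨u, rfl⟩ := (uniqueAlgEquiv R _).symm.surjective r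
  refine ⟨u, (map_ne_zero_iff _ (AlgEquiv.injective _)).1 hr, ?_⟩
  have coe_default : ((default : {j : Fin 2 // j ≠ i.rev}) : Fin 2) = i := rfl
  have rename_symm : (rename (↑)).comp (uniqueAlgEquiv R {j // j ≠ i.rev}).symm.toAlgHom =
      Polynomial.aeval (X i) := Polynomial.algHom_ext (by simp [coe_default])
  rwa [← rename_symm]

theorem common_zeros_finite_general {S : Type*} [CommRing S] [IsDomain S] [Algebra R S]
    [FaithfulSMul R S] {p q : MvPolynomial (Fin 2) R} (hpq : IsRelPrime p q) :
    {v : Fin 2 → S | aeval v p = 0 ∧ aeval v q = 0}.Finite := by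
  choose u hu hmem using exists_aeval_X_mem_span_pair hpq
  refine (Set.Finite.pi' fun i => (u i).rootSet_finite S).subset fun v hv i => ?_
  have span_le_ker : Ideal.span {p, q} ≤ RingHom.ker (aeval v : _ →ₐ[R] S) :=
    Ideal.span_le.2 (Set.pair_subset hv.1 hv.2)
  have hroot : Polynomial.aeval (v i) (u i) = 0 := by
    simpa [← Polynomial.aeval_algHom_apply] using span_le_ker (hmem i)
  exact (Polynomial.mem_rootSet_of_injective (FaithfulSMul.algebraMap_injective R S) (hu i)).2 hroot

end Elimination

/-- Coprime nonzero real polynomials in two variables have finitely many common zeros. -/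
theorem common_zeros_finite (p q : MvPolynomial (Fin 2) ℝ) (hp : p ≠ 0) (hq : q ≠ 0)
    (hcop : ∀ d : MvPolynomial (Fin 2) ℝ, d ∣ p → d ∣ q → IsUnit d) :
    {v : ℝ × ℝ | pev p v = 0 ∧ pev q v = 0}.Finite :=
  (common_zeros_finite_general @hcop).preimage (finTwoArrowEquiv ℝ).symm.injective.injOn
end

section
/- Let f = p/q be a rational function of two real variables. Then the set of points of bounded discontinuity of f is finite. (Every such point is a common zero of p and q, and there are only finitely many common zeros.) -/
open MvPolynomial Filter Topology

/-- `p/q` is bounded near `v₀`. -/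
def BoundedNear (p q : MvPolynomial (Fin 2) ℝ) (v₀ : ℝ × ℝ) : Prop :=
  ∃ U ∈ nhds v₀, ∃ M : ℝ, ∀ v ∈ U, pev q v ≠ 0 → |pev p v / pev q v| ≤ M

/-!
If `p / q` stays bounded near a zero `v` of `q`, then `p = (p / q) * q` tends to `0` at `v` along
the dense set where `q ≠ 0`, so `v` is also a zero of `p`. By Gauss's lemma, relatively prime
`p, q ∈ R[X][Y]` remain relatively prime in `Frac(R[X])[Y]`, so clearing denominators in a Bézout
identity puts a nonzero `r ∈ R[X]` in the ideal `(p, q)`; the first coordinates of the common zeros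
are roots of `r`. Exchanging the variables bounds the second coordinates.
-/

open scoped Polynomial Polynomial.Bivariate nonZeroDivisors

section RelPrime

variable {R K : Type*} [CommRing R] [IsDomain R] [IsGCDMonoid R]
  [Field K] [Algebra R K] [IsFractionRing R K]

theorem exists_isPrimitive_associated_map_fraction {d : K[X]} (hd : d ≠ 0) :
    ∃ e : R[X], e.IsPrimitive ∧ Associated (e.map (algebraMap R K)) d := by
  have := Classical.arbitrary (NormalizedGCDMonoid R)
  have isUnit_C {r : R} (hr : r ≠ 0) : IsUnit (Polynomial.C (algebraMap R K r)) :=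
    Polynomial.isUnit_C.2 (IsUnit.mk0 _ ((FaithfulSMul.algebraMap_eq_zero_iff R K).not.2 hr))
  obtain ⟨b, hb, hbd⟩ := IsLocalization.integerNormalization_spec R⁰ d
  set e := IsLocalization.integerNormalization R⁰ d
  have content_ne_zero : e.content ≠ 0 := by
    rwa [Ne, Polynomial.content_eq_zero_iff, IsFractionRing.integerNormalization_eq_zero_iff]
  have map_eq : Polynomial.C (algebraMap R K e.content) * e.primPart.map (algebraMap R K) =
      Polynomial.C (algebraMap R K b) * d := by
    rw [← Polynomial.map_C, ← Polynomial.map_mul, ← e.eq_C_content_mul_primPart, hbd,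
      Algebra.smul_def, Polynomial.algebraMap_apply]
  refine ⟨e.primPart, e.isPrimitive_primPart, ?_⟩
  rw [← associated_isUnit_mul_left_iff (isUnit_C content_ne_zero), map_eq]
  exact associated_unit_mul_left d _ (isUnit_C (nonZeroDivisors.ne_zero hb))

variable (K) in
theorem isCoprime_map_fraction_of_isRelPrime {p q : R[X]} (h : IsRelPrime p q) :
    IsCoprime (p.map (algebraMap R K)) (q.map (algebraMap R K)) := by
  refine IsRelPrime.isCoprime fun d hdp hdq ↦ ?_
  have hd : d ≠ 0 := by
    rintro rfl
    simp only [zero_dvd_iff, Polynomial.map_eq_zero_iff (IsFractionRing.injective R K)] at hdp hdq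
    exact not_isRelPrime_zero_zero (hdp ▸ hdq ▸ h)
  obtain ⟨e, he, hed⟩ := exists_isPrimitive_associated_map_fraction (R := R) hd
  have isUnit_e : IsUnit e :=
    h (he.dvd_of_fraction_map_dvd_fraction_map (hed.dvd.trans hdp))
      (he.dvd_of_fraction_map_dvd_fraction_map (hed.dvd.trans hdq))
  exact hed.isUnit (isUnit_e.map (Polynomial.mapRingHom (algebraMap R K)))

theorem exists_C_mem_span_pair_of_isRelPrime {p q : R[X]} (h : IsRelPrime p q) :
    ∃ r ≠ 0, Polynomial.C r ∈ Ideal.span {p, q} := by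
  let K := FractionRing R
  let := Polynomial.algebra R K
  have := Polynomial.isLocalization R⁰ K
  have map_span_eq_top : (Ideal.span {p, q}).map (algebraMap R[X] K[X]) = ⊤ := by
    rw [Ideal.map_span, Set.image_pair]
    exact (Ideal.eq_top_iff_one _).2
      (Ideal.mem_span_pair.2 (isCoprime_map_fraction_of_isRelPrime K h))
  have not_disjoint := mt (IsLocalization.map_algebraMap_ne_top_iff_disjoint
    (R⁰.map (Polynomial.C : R →+* R[X])) K[X] _).2 (not_not.2 map_span_eq_top)
  obtain ⟨_, ⟨r, hr, rfl⟩, hr_mem⟩ := Set.not_disjoint_iff.1 not_disjoint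
  exact ⟨r, nonZeroDivisors.ne_zero hr, hr_mem⟩

end RelPrime

theorem evalEval_swap {R : Type*} [CommSemiring R] (x y : R) (p : R[X][Y]) :
    (Polynomial.Bivariate.swap p).evalEval x y = p.evalEval y x := by
  simpa only [Polynomial.coe_aevalAeval_eq_evalEval] using
    Polynomial.Bivariate.aevalAeval_swap x y p

theorem evalEval_equivMvPolynomial_symm {R : Type*} [CommSemiring R] (v : Fin 2 → R)
    (p : MvPolynomial (Fin 2) R) :
    ((Polynomial.Bivariate.equivMvPolynomial R).symm p).evalEval (v 0) (v 1) = eval v p := by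
  induction p using MvPolynomial.induction_on with
  | C a => simp
  | add p q hp hq => simp only [map_add, Polynomial.evalEval_add, hp, hq]
  | mul_X p i hp => fin_cases i <;> simp [Polynomial.evalEval_mul, Polynomial.evalEval_C, hp]

section CommonZeros

variable {R : Type*} [CommRing R] [IsDomain R] [IsGCDMonoid R]

theorem finite_fst_commonZeros_of_isRelPrime {p q : R[X][Y]} (h : IsRelPrime p q) :
    {x | ∃ y, p.evalEval x y = 0 ∧ q.evalEval x y = 0}.Finite := by
  obtain ⟨r, hr, hr_mem⟩ := exists_C_mem_span_pair_of_isRelPrime h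
  refine (Polynomial.finite_setOfPred_isRoot hr).subset ?_
  rintro x ⟨y, hp, hq⟩
  have span_le_ker : Ideal.span {p, q} ≤ RingHom.ker (Polynomial.evalEvalRingHom x y) :=
    Ideal.span_le.2 (Set.pair_subset hp hq)
  simpa using span_le_ker hr_mem

theorem finite_commonZeros_evalEval_of_isRelPrime {p q : R[X][Y]} (h : IsRelPrime p q) :
    {v : R × R | p.evalEval v.1 v.2 = 0 ∧ q.evalEval v.1 v.2 = 0}.Finite := by
  have h_swap : IsRelPrime (Polynomial.Bivariate.swap p) (Polynomial.Bivariate.swap q) :=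
    .of_map Polynomial.Bivariate.swap <| by
      rwa [Polynomial.Bivariate.swap_swap_apply, Polynomial.Bivariate.swap_swap_apply]
  refine ((finite_fst_commonZeros_of_isRelPrime h).prod
    (finite_fst_commonZeros_of_isRelPrime h_swap)).subset ?_
  rintro ⟨x, y⟩ ⟨hp, hq⟩
  exact ⟨⟨y, hp, hq⟩, x, by rwa [evalEval_swap], by rwa [evalEval_swap]⟩

theorem finite_commonZeros_of_isRelPrime {p q : MvPolynomial (Fin 2) R} (h : IsRelPrime p q) :
    {v : Fin 2 → R | eval v p = 0 ∧ eval v q = 0}.Finite := by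
  let e := Polynomial.Bivariate.equivMvPolynomial R
  have h_symm : IsRelPrime (e.symm p) (e.symm q) := .of_map e (by simpa using h)
  convert (finite_commonZeros_evalEval_of_isRelPrime h_symm).preimage
    (finTwoArrowEquiv R).injective.injOn using 1
  simp [e, evalEval_equivMvPolynomial_symm]

end CommonZeros

theorem dense_setOf_eval_ne_zero {σ R : Type*} [CommRing R] [IsDomain R] [TopologicalSpace R]
    [T1Space R] [∀ x : R, (𝓝[≠] x).NeBot] {q : MvPolynomial σ R} (hq : q ≠ 0) :
    Dense {v : σ → R | eval v q ≠ 0} := by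
  refine fun v ↦ mem_closure_iff_nhds.2 fun U hU ↦ ?_
  rw [nhds_pi, mem_pi] at hU
  obtain ⟨I, -, t, ht, hIU⟩ := hU
  by_contra! h
  refine hq (funext_set t (fun i ↦ infinite_of_mem_nhds (v i) (ht i)) fun w hw ↦ ?_)
  by_contra! hqw
  exact (Set.eq_empty_iff_forall_notMem.1 h w) ⟨hIU fun i _ ↦ hw i trivial, by simpa using hqw⟩

theorem eq_zero_of_isBoundedUnder_norm_div {X 𝕜 : Type*} [TopologicalSpace X] [NormedDivisionRing 𝕜]
    {f g : X → 𝕜} {x : X} (hf : ContinuousAt f x) (hg : ContinuousAt g x)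
    (hx : x ∈ closure {y | g y ≠ 0})
    (h : IsBoundedUnder (· ≤ ·) (𝓝[{y | g y ≠ 0}] x) fun y ↦ ‖f y / g y‖) (hgx : g x = 0) :
    f x = 0 := by
  have : (𝓝[{y | g y ≠ 0}] x).NeBot := mem_closure_iff_nhdsWithin_neBot.1 hx
  have hg_tendsto : Tendsto g (𝓝[{y | g y ≠ 0}] x) (𝓝 0) := hgx ▸ hg.continuousWithinAt.tendsto
  have div_mul_eventuallyEq : (fun y ↦ f y / g y * g y) =ᶠ[𝓝[{y | g y ≠ 0}] x] f :=
    eventually_mem_nhdsWithin.mono fun y hy ↦ div_mul_cancel₀ (f y) hy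
  exact tendsto_nhds_unique hf.continuousWithinAt.tendsto
    ((isBoundedUnder_le_mul_tendsto_zero h hg_tendsto).congr' div_mul_eventuallyEq)

theorem bounded_discontinuity_finite_general {𝕜 : Type*} [NontriviallyNormedField 𝕜]
    {p q : MvPolynomial (Fin 2) 𝕜} (hq : q ≠ 0) (hpq : IsRelPrime p q) :
    {v | IsBoundedUnder (· ≤ ·) (𝓝[{w | eval w q ≠ 0}] v) (fun w ↦ ‖eval w p / eval w q‖) ∧
      eval v q = 0}.Finite :=
  (finite_commonZeros_of_isRelPrime hpq).subset fun v ⟨hb, hqv⟩ ↦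
    ⟨eq_zero_of_isBoundedUnder_norm_div (f := (eval · p)) (continuous_eval p).continuousAt
      (continuous_eval q).continuousAt (dense_setOf_eval_ne_zero hq v) hb hqv, hqv⟩

theorem pev_finTwoArrow (p : MvPolynomial (Fin 2) ℝ) (w : Fin 2 → ℝ) :
    pev p (Homeomorph.finTwoArrow w) = eval w p :=
  congrArg (eval · p) (Homeomorph.finTwoArrow.symm_apply_apply w)

theorem BoundedNear.isBoundedUnder_norm_div {p q : MvPolynomial (Fin 2) ℝ} {v : ℝ × ℝ}
    (h : BoundedNear p q v) :
    IsBoundedUnder (· ≤ ·) (𝓝[{w | eval w q ≠ 0}] ![v.1, v.2])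
      fun w ↦ ‖eval w p / eval w q‖ := by
  obtain ⟨U, hU, M, hM⟩ := h
  refine isBoundedUnder_of_eventually_le (a := M) (eventually_nhdsWithin_iff.2 ?_)
  have preimage_mem : Homeomorph.finTwoArrow ⁻¹' U ∈ 𝓝 ![v.1, v.2] :=
    Homeomorph.finTwoArrow.continuous.continuousAt.preimage_mem_nhds hU
  filter_upwards [preimage_mem] with w hw hqw
  simpa only [pev_finTwoArrow, Real.norm_eq_abs] using hM _ hw (by rwa [pev_finTwoArrow])

/-- The set of points of bounded discontinuity of a rational function `p/q` is finite. -/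
theorem bounded_discontinuity_finite (p q : MvPolynomial (Fin 2) ℝ) (hq : q ≠ 0)
    (hcop : ∀ d : MvPolynomial (Fin 2) ℝ, d ∣ p → d ∣ q → IsUnit d) :
    {v₀ : ℝ × ℝ | BoundedNear p q v₀ ∧ pev q v₀ = 0}.Finite := by
  have h_finite := bounded_discontinuity_finite_general hq @hcop
  exact (h_finite.preimage (finTwoArrowEquiv ℝ).symm.injective.injOn).subset
    fun v ⟨hb, hqv⟩ ↦ ⟨hb.isBoundedUnder_norm_div, hqv⟩
end

section
/- Let (e_k)_{k≥1} be a strictly increasing sequence of rational numbers with e_1 ≥ 1. Then for every n ∈ ℕ and every s ∈ ℚ, the set of nondecreasing n-tuples (k_1 ≤ k_2 ≤ ⋯ ≤ k_n) of positive integers with e_{k_1} + e_{k_2} + ⋯ + e_{k_n} = s is finite. -/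
open Filter Topology

/-! By Dickson's lemma a finite product of well-quasi-orders is again a well-quasi-order, so all its
antichains are finite. The tuples with a given exponent sum form an antichain, because raising any
index strictly raises the sum. -/

theorem isAntichain_preimage_of_strictMono {α β : Type*} [PartialOrder α] [Preorder β]
    {f : α → β} (hf : StrictMono f) {t : Set β} (ht : IsAntichain (· ≤ ·) t) :
    IsAntichain (· ≤ ·) (f ⁻¹' t) := fun a ha b hb hne hle =>
  have hlt : f a < f b := hf (hle.lt_of_ne hne)
  ht ha hb hlt.ne hlt.le

theorem finite_preimage_of_strictMono {α β : Type*} [PartialOrder α] [WellQuasiOrderedLE α]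
    [Preorder β] {f : α → β} (hf : StrictMono f) {t : Set β} (ht : IsAntichain (· ≤ ·) t) :
    (f ⁻¹' t).Finite :=
  WellQuasiOrderedLE.finite_of_isAntichain (isAntichain_preimage_of_strictMono hf ht)

theorem strictMono_piMap {ι : Type*} {α β : ι → Type*} [∀ i, PartialOrder (α i)]
    [∀ i, Preorder (β i)] {f : ∀ i, α i → β i} (hf : ∀ i, StrictMono (f i)) :
    StrictMono (Pi.map f) := fun _ _ hkl =>
  let ⟨hle, i, hlt⟩ := Pi.lt_def.mp hkl
  Pi.lt_def.mpr ⟨fun j => (hf j).monotone (hle j), i, hf i hlt⟩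

theorem exponent_sum_finite_general {ι M : Type*} [Fintype ι] {α : ι → Type*}
    [∀ i, PartialOrder (α i)] [∀ i, WellQuasiOrderedLE (α i)]
    [AddCommMonoid M] [PartialOrder M] [IsOrderedCancelAddMonoid M]
    {e : ∀ i, α i → M} (he : ∀ i, StrictMono (e i)) (s : M) :
    {k : ∀ i, α i | ∑ i, e i (k i) = s}.Finite :=
  have sum_strictMono : StrictMono fun k : ∀ i, α i => ∑ i, e i (k i) :=
    Fintype.sum_strictMono.comp (strictMono_piMap he)
  finite_preimage_of_strictMono sum_strictMono (t := {s}) IsAntichain.singleton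

/-- For a strictly increasing sequence of rationals `e` with `e 0 ≥ 1`, for each `n` and
each rational `s`, there are only finitely many nondecreasing `n`-tuples of indices whose
associated exponents sum to `s`. -/
theorem exponent_sum_finite (e : ℕ → ℚ) (he : StrictMono e) (h1 : 1 ≤ e 0) (n : ℕ) (s : ℚ) :
    {k : Fin n → ℕ | Monotone k ∧ ∑ i, e (k i) = s}.Finite :=
  (exponent_sum_finite_general (fun _ => he) s).subset fun _ hk => hk.2
end

section
/- Let f = p/q be a rational function of two real variables bounded near (x₀,y₀). Let Φ(t) = Σ_{k=1}^N φ_k |t|^{e_k} be a function of type (i) (N ≥ 0) and let e be an irrational real number with e ≥ 1 and, if N ≥ 1, e ≥ e_N. Define the curve y = y₀ + Φ(x−x₀) + |x−x₀|^e. Then both one-sided limits lim_{x→x₀⁺} f(x, y₀+Φ(x−x₀)+|x−x₀|^e) and lim_{x→x₀⁻} f(x, y₀+Φ(x−x₀)+|x−x₀|^e) exist and are finite (the curve eventually avoids the zero set of q on each side). -/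
open MvPolynomial Filter Topology

/-!
Substituting `u = |x - x₀| ^ (1 / n)`, with `n` a common denominator of the exponents of `Φ`, turns
the curve into `u ↦ (G(u), F(u) + u ^ θ)` with `G`, `F` polynomials and `θ = n * e` irrational.
A polynomial `r ≠ 0` of two variables restricts to this curve as a finite sum of terms
`c * u ^ (i + j * θ)`. Since `θ` is irrational, distinct `(i, j)` give distinct exponents, so no
cancellation occurs and `r` is equivalent to its term of least exponent as `u → 0⁺`. Hence `p / q`
is equivalent to some `c * u ^ γ`, and boundedness forces `γ ≥ 0`.
-/

open Asymptotics
open scoped Polynomial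

theorem tendsto_rpow_nhdsGT_zero {α : ℝ} (hα : 0 < α) :
    Tendsto (fun t : ℝ => t ^ α) (𝓝[>] 0) (𝓝[>] 0) := by
  refine tendsto_nhdsWithin_iff.mpr ⟨?_, ?_⟩
  · exact (tendsto_nhdsWithin_of_tendsto_nhds tendsto_id).rpow_const_nhds_zero hα
  · filter_upwards [self_mem_nhdsWithin] with t (ht : 0 < t)
    exact Real.rpow_pos_of_pos ht α

theorem isLittleO_rpow_rpow_nhdsGT_zero {α β : ℝ} (h : α < β) :
    (fun t : ℝ => t ^ β) =o[𝓝[>] 0] fun t => t ^ α := by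
  have hlim : Tendsto (fun t : ℝ => t ^ (β - α)) (𝓝[>] 0) (𝓝 0) :=
    (tendsto_rpow_nhdsGT_zero (sub_pos.mpr h)).mono_right nhdsWithin_le_nhds
  refine (isLittleO_iff_tendsto' ?_).mpr (hlim.congr' ?_)
  · filter_upwards [self_mem_nhdsWithin] with t (ht : 0 < t) h0
    exact absurd h0 (Real.rpow_pos_of_pos ht α).ne'
  · filter_upwards [self_mem_nhdsWithin] with t (ht : 0 < t)
    exact Real.rpow_sub ht β α

theorem isEquivalent_sum_rpow_nhdsGT_zero {ι : Type*} {S : Finset ι} {a c : ι → ℝ} {i₀ : ι}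
    (hi₀ : i₀ ∈ S) (hmin : ∀ i ∈ S, i ≠ i₀ → a i₀ < a i) (hc : c i₀ ≠ 0) :
    (fun t : ℝ => ∑ i ∈ S, c i * t ^ a i) ~[𝓝[>] 0] fun t => c i₀ * t ^ a i₀ := by
  classical
  have hrest : (fun t : ℝ => ∑ i ∈ S.erase i₀, c i * t ^ a i) =o[𝓝[>] 0]
      fun t => c i₀ * t ^ a i₀ := by
    refine IsLittleO.fun_sum fun i hi => ?_
    obtain ⟨hne, hiS⟩ := Finset.mem_erase.mp hi
    exact ((isLittleO_rpow_rpow_nhdsGT_zero (hmin i hiS hne)).const_mul_left _).const_mul_right hc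
  refine hrest.congr_left fun t => ?_
  simp only [Pi.sub_apply, ← Finset.add_sum_erase S _ hi₀, add_sub_cancel_left]

theorem exists_tendsto_of_isEquivalent_rpow_of_bounded {h : ℝ → ℝ} {c γ M : ℝ} (hc : c ≠ 0)
    (hh : h ~[𝓝[>] 0] fun t => c * t ^ γ) (hM : ∀ᶠ t in 𝓝[>] 0, |h t| ≤ M) :
    ∃ L, Tendsto h (𝓝[>] 0) (𝓝 L) := by
  rcases le_or_gt 0 γ with hγ | hγ
  · have hpow : Tendsto (fun t : ℝ => t ^ γ) (𝓝[>] 0) (𝓝 (0 ^ γ)) :=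
      (Real.continuousAt_rpow_const 0 γ (Or.inr hγ)).tendsto.mono_left nhdsWithin_le_nhds
    exact ⟨c * 0 ^ γ, hh.symm.tendsto_nhds (hpow.const_mul c)⟩
  · have hinf : Tendsto (fun t => |c * t ^ γ|) (𝓝[>] 0) atTop := by
      refine ((tendsto_rpow_neg_nhdsGT_zero hγ).const_mul_atTop (abs_pos.mpr hc)).congr' ?_
      filter_upwards [self_mem_nhdsWithin] with t (ht : 0 < t)
      rw [abs_mul, abs_of_pos (Real.rpow_pos_of_pos ht γ)]
    have hbounded : (fun t => c * t ^ γ) =O[𝓝[>] 0] fun _ => (1 : ℝ) :=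
      hh.isBigO_symm.trans (IsBigO.of_bound M (by simpa using hM))
    have hunder := (isBigO_one_iff ℝ).mp hbounded
    exact absurd hunder (not_isBoundedUnder_of_tendsto_atTop hinf)

theorem exists_common_denominator {ι : Type*} [Finite ι] {a : ι → ℚ} (ha : ∀ k, 0 ≤ a k) :
    ∃ n : ℕ, n ≠ 0 ∧ ∃ m : ι → ℕ, ∀ k, n * a k = m k := by
  classical
  have := Fintype.ofFinite ι
  lift a to ι → ℚ≥0 using ha
  refine ⟨∏ k, (a k).den, Finset.prod_ne_zero_iff.mpr fun k _ => (a k).den_ne_zero,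
    fun k => (∏ j ∈ Finset.univ.erase k, (a j).den) * (a k).num, fun k => ?_⟩
  rw [← Finset.prod_erase_mul _ _ (Finset.mem_univ k)]
  push_cast
  rw [mul_assoc]
  congr 1
  exact_mod_cast NNRat.den_mul_eq_num (a k)

theorem exists_polynomial_eval_eq_sum_rpow {ι : Type*} [Fintype ι] (φ : ι → ℝ) {ee : ι → ℚ}
    (hee : ∀ k, 0 < ee k) :
    ∃ n : ℕ, n ≠ 0 ∧ ∃ F : ℝ[X], F.eval 0 = 0 ∧
      ∀ t : ℝ, 0 ≤ t → ∑ k, φ k * t ^ (ee k : ℝ) = F.eval (t ^ (n : ℝ)⁻¹) := by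
  obtain ⟨n, hn, m, hm⟩ := exists_common_denominator fun k => (hee k).le
  have hn' : (n : ℝ) ≠ 0 := Nat.cast_ne_zero.mpr hn
  have hm0 : ∀ k, m k ≠ 0 := fun k h0 => by
    have := hm k
    simp [h0, hn, (hee k).ne'] at this
  refine ⟨n, hn, ∑ k, Polynomial.C (φ k) * Polynomial.X ^ m k, ?_, fun t ht => ?_⟩
  · simp [Polynomial.eval_finsetSum, hm0]
  · simp only [Polynomial.eval_finsetSum, Polynomial.eval_mul, Polynomial.eval_C,
      Polynomial.eval_pow, Polynomial.eval_X]
    refine Finset.sum_congr rfl fun k _ => ?_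
    have hexp : (ee k : ℝ) = (n : ℝ)⁻¹ * m k := by
      rw [eq_inv_mul_iff_mul_eq₀ hn']
      exact_mod_cast hm k
    rw [hexp, Real.rpow_mul_natCast ht]

theorem infinite_range_eval_of_natDegree_pos {R : Type*} [CommRing R] [IsDomain R] [Infinite R]
    {H : R[X]} (hH : 0 < H.natDegree) : (Set.range fun u => H.eval u).Infinite := by
  intro hfin
  refine Set.infinite_univ ((hfin.preimage' fun c _ => ?_).subset fun u _ => Set.mem_range_self u)
  by_contra hfiber
  have hconst : H = Polynomial.C c :=
    Polynomial.eq_of_infinite_eval_eq H (Polynomial.C c) (by simpa using! hfiber)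
  rw [hconst, Polynomial.natDegree_C] at hH
  exact hH.false

section Restriction

/-- The curve `t ↦ (G(t), F(t) + t ^ θ)`: a polynomial curve perturbed in its second coordinate by
a real power. The original curve takes this form once its rational exponents are cleared. -/
noncomputable def perturbedCurve (G F : ℝ[X]) (θ t : ℝ) : ℝ × ℝ :=
  (G.eval t, F.eval t + t ^ θ)

/-- The pullback `r(G(X₀), F(X₀) + X₁)` of a polynomial `r`; setting `X₀ = t` and `X₁ = t ^ θ`
in it restricts `r` to `perturbedCurve G F θ`. -/
noncomputable def curvePullback (G F : ℝ[X]) :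
    MvPolynomial (Fin 2) ℝ →ₐ[ℝ] MvPolynomial (Fin 2) ℝ :=
  bind₁ ![Polynomial.aeval (X 0) G, Polynomial.aeval (X 0) F + X 1]

variable (G F : ℝ[X]) {θ : ℝ}

theorem eval_curvePullback (r : MvPolynomial (Fin 2) ℝ) (u w : ℝ) :
    eval ![u, w] (curvePullback G F r) = pev r (G.eval u, F.eval u + w) := by
  have heval (H : ℝ[X]) :
      aeval ![u, w] (Polynomial.aeval (X 0 : MvPolynomial (Fin 2) ℝ) H) = H.eval u := by
    rw [← Polynomial.aeval_algHom_apply, aeval_X, Matrix.cons_val_zero,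
      Polynomial.coe_aeval_eq_eval]
  rw [← aeval_eq_eval, curvePullback, aeval_bind₁, pev, ← aeval_eq_eval]
  congr 2
  funext i
  fin_cases i <;> simp [heval, -aeval_eq_eval]

theorem pev_perturbedCurve_eq_sum_rpow (θ : ℝ) (r : MvPolynomial (Fin 2) ℝ) {t : ℝ} (ht : 0 < t) :
    pev r (perturbedCurve G F θ t) =
      ∑ m ∈ (curvePullback G F r).support,
        (curvePullback G F r).coeff m * t ^ (m 0 + m 1 * θ : ℝ) := by
  rw [perturbedCurve, ← eval_curvePullback, eval_eq']
  refine Finset.sum_congr rfl fun m _ => ?_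
  rw [Fin.prod_univ_two, Matrix.cons_val_zero, Matrix.cons_val_one, Matrix.cons_val_fin_one,
    ← Real.rpow_natCast, ← Real.rpow_mul_natCast ht.le, ← Real.rpow_add ht, mul_comm θ]

variable {G}

theorem curvePullback_ne_zero (hG : 0 < G.natDegree) {r : MvPolynomial (Fin 2) ℝ} (hr : r ≠ 0) :
    curvePullback G F r ≠ 0 := by
  contrapose! hr
  -- The image of `(u, w) ↦ (G(u), F(u) + w)` is `range G × ℝ`, a product of infinite sets.
  have hinf : ∀ i, ((![Set.range fun u => G.eval u, Set.univ] : Fin 2 → Set ℝ) i).Infinite :=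
    Fin.forall_fin_two.mpr ⟨infinite_range_eval_of_natDegree_pos hG, Set.infinite_univ⟩
  refine funext_set _ hinf fun v hv => ?_
  obtain ⟨u, hu : G.eval u = v 0⟩ := hv 0 (Set.mem_univ _)
  have hpev := eval_curvePullback G F r u (v 1 - F.eval u)
  have heta : ![v 0, v 1] = v := FinVec.etaExpand_eq v
  rw [hr, map_zero, hu, add_sub_cancel, pev, heta] at hpev
  rw [← hpev, map_zero]

theorem injective_add_mul_of_irrational (hθ : Irrational θ) :
    Function.Injective fun m : Fin 2 →₀ ℕ => (m 0 + m 1 * θ : ℝ) := by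
  intro m m' (h : (m 0 + m 1 * θ : ℝ) = m' 0 + m' 1 * θ)
  have h₁ : m 1 = m' 1 := by
    by_contra hne
    have hne' : (m 1 - m' 1 : ℤ) ≠ 0 := sub_ne_zero.mpr (by exact_mod_cast hne)
    refine (hθ.intCast_mul hne').ne_int (m' 0 - m 0) ?_
    push_cast
    linarith
  have h₀ : m 0 = m' 0 := by
    rw [h₁] at h
    exact_mod_cast add_right_cancel h
  exact Finsupp.ext (Fin.forall_fin_two.mpr ⟨h₀, h₁⟩)

theorem exists_isEquivalent_rpow_perturbedCurve (hG : 0 < G.natDegree) (hθ : Irrational θ)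
    {r : MvPolynomial (Fin 2) ℝ} (hr : r ≠ 0) :
    ∃ c α : ℝ, c ≠ 0 ∧
      (fun t => pev r (perturbedCurve G F θ t)) ~[𝓝[>] 0] fun t => c * t ^ α := by
  set S := (curvePullback G F r).support
  have hS : S.Nonempty := support_nonempty.mpr (curvePullback_ne_zero F hG hr)
  let a : (Fin 2 →₀ ℕ) → ℝ := fun m => m 0 + m 1 * θ
  obtain ⟨m₀, hm₀, hmin⟩ := S.exists_min_image a hS
  have hlt : ∀ m ∈ S, m ≠ m₀ → a m₀ < a m := fun m hm hne =>
    (hmin m hm).lt_of_ne fun h => hne (injective_add_mul_of_irrational hθ h).symm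
  refine ⟨_, a m₀, mem_support_iff.mp hm₀, ?_⟩
  refine (isEquivalent_sum_rpow_nhdsGT_zero hm₀ hlt (mem_support_iff.mp hm₀)).congr_left ?_
  filter_upwards [self_mem_nhdsWithin] with t ht
  exact (pev_perturbedCurve_eq_sum_rpow G F θ r ht).symm

end Restriction

section Convergence

/-- `p / q` has a finite limit along the curve `γ` and the filter `l`. Nonvanishing of `q` is
part of the notion, so that the limit does not see the junk value `x / 0 = 0`. -/
def ConvergesAlong {α : Type*} (p q : MvPolynomial (Fin 2) ℝ) (γ : α → ℝ × ℝ) (l : Filter α) :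
    Prop :=
  (∀ᶠ t in l, pev q (γ t) ≠ 0) ∧ ∃ L : ℝ, Tendsto (fun t => pev p (γ t) / pev q (γ t)) l (𝓝 L)

variable {p q : MvPolynomial (Fin 2) ℝ}

theorem ConvergesAlong.comp_congr {α β : Type*} {γ : α → ℝ × ℝ} {δ : β → ℝ × ℝ} {l : Filter α}
    {l' : Filter β} {u : β → α} (h : ConvergesAlong p q γ l) (hu : Tendsto u l' l)
    (hδ : γ ∘ u =ᶠ[l'] δ) : ConvergesAlong p q δ l' := by
  obtain ⟨hne, L, hL⟩ := h
  refine ⟨?_, L, (hL.comp hu).congr' ?_⟩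
  · filter_upwards [hu.eventually hne, hδ] with x hx hxδ
    rwa [← hxδ]
  · filter_upwards [hδ] with x hxδ
    rw [← hxδ]
    rfl

theorem tendsto_perturbedCurve (G F : ℝ[X]) {θ : ℝ} (hθ : 0 < θ) :
    Tendsto (perturbedCurve G F θ) (𝓝[>] 0) (𝓝 (G.eval 0, F.eval 0)) := by
  have hcont : ContinuousAt (perturbedCurve G F θ) 0 :=
    G.continuous.continuousAt.prodMk
      (F.continuous.continuousAt.add (Real.continuousAt_rpow_const _ _ (Or.inr hθ.le)))
  have hzero : perturbedCurve G F θ 0 = (G.eval 0, F.eval 0) := by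
    simp [perturbedCurve, Real.zero_rpow hθ.ne']
  exact hzero ▸ hcont.tendsto.mono_left nhdsWithin_le_nhds

theorem BoundedNear.convergesAlong_perturbedCurve {G F : ℝ[X]} {θ : ℝ}
    (hb : BoundedNear p q (G.eval 0, F.eval 0)) (hq : q ≠ 0) (hG : 0 < G.natDegree)
    (hθ : Irrational θ) (hθ0 : 0 < θ) : ConvergesAlong p q (perturbedCurve G F θ) (𝓝[>] 0) := by
  obtain ⟨b, β, hb0, hqβ⟩ := exists_isEquivalent_rpow_perturbedCurve F hG hθ hq
  have hqne : ∀ᶠ t in 𝓝[>] 0, pev q (perturbedCurve G F θ t) ≠ 0 := by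
    filter_upwards [hqβ.isBigO_symm.eq_zero_imp, self_mem_nhdsWithin] with t himp (ht : 0 < t) h0
    exact mul_ne_zero hb0 (Real.rpow_pos_of_pos ht β).ne' (himp h0)
  refine ⟨hqne, ?_⟩
  rcases eq_or_ne p 0 with rfl | hp
  · exact ⟨0, by simp [pev]⟩
  obtain ⟨a, α, ha0, hpα⟩ := exists_isEquivalent_rpow_perturbedCurve F hG hθ hp
  obtain ⟨U, hU, M, hM⟩ := hb
  refine exists_tendsto_of_isEquivalent_rpow_of_bounded (γ := α - β) (M := M)
    (div_ne_zero ha0 hb0) ((hpα.div hqβ).congr_right ?_) ?_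
  · filter_upwards [self_mem_nhdsWithin] with t (ht : 0 < t)
    rw [Pi.div_apply, Real.rpow_sub ht, mul_div_mul_comm]
  · filter_upwards [tendsto_perturbedCurve G F hθ0 hU, hqne] with t htU htq
    exact hM _ htU htq

theorem BoundedNear.convergesAlong_rpow_curve {x₀ y₀ : ℝ} (hb : BoundedNear p q (x₀, y₀))
    (hq : q ≠ 0) {ι : Type*} [Fintype ι] (φ : ι → ℝ) {ee : ι → ℚ} (hee : ∀ k, 0 < ee k) {e : ℝ}
    (hirr : Irrational e) (he : 0 < e) {s : ℝ} (hs : s ≠ 0) {l : Filter ℝ} (hl : l ≤ 𝓝[≠] x₀)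
    (hside : ∀ᶠ x in l, x₀ + s * |x - x₀| = x) :
    ConvergesAlong p q
      (fun x => (x, y₀ + (∑ k, φ k * |x - x₀| ^ (ee k : ℝ)) + |x - x₀| ^ e)) l := by
  obtain ⟨n, hn, F, hF0, hF⟩ := exists_polynomial_eval_eq_sum_rpow φ hee
  have hn' : (n : ℝ) ≠ 0 := Nat.cast_ne_zero.mpr hn
  set G : ℝ[X] := Polynomial.C x₀ + Polynomial.C s * Polynomial.X ^ n with hGdef
  have hG : 0 < G.natDegree := by
    rw [hGdef, Polynomial.natDegree_C_add, Polynomial.natDegree_C_mul_X_pow _ _ hs]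
    exact hn.bot_lt
  have hb' : BoundedNear p q (G.eval 0, (Polynomial.C y₀ + F).eval 0) := by
    simpa [hGdef, hF0, hn] using hb
  have hconv := hb'.convergesAlong_perturbedCurve hq hG (hirr.natCast_mul hn)
    (mul_pos (Nat.cast_pos.mpr hn.bot_lt) he)
  have hroot : Tendsto (fun t : ℝ => t ^ (n : ℝ)⁻¹) (𝓝[>] 0) (𝓝[>] 0) :=
    tendsto_rpow_nhdsGT_zero (by positivity)
  refine hconv.comp_congr (hroot.comp ((tendsto_norm_sub_self_nhdsNE x₀).mono_left hl)) ?_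
  filter_upwards [hside] with x hx
  have ht : 0 ≤ |x - x₀| := abs_nonneg _
  simp only [Function.comp_apply, Real.norm_eq_abs, perturbedCurve, hGdef, Polynomial.eval_add,
    Polynomial.eval_mul, Polynomial.eval_C, Polynomial.eval_pow, Polynomial.eval_X,
    Real.rpow_inv_natCast_pow ht hn, hx, ← hF _ ht, ← Real.rpow_mul ht, inv_mul_cancel_left₀ hn']

end Convergence

theorem irrational_exponent_curve_limits_general (p q : MvPolynomial (Fin 2) ℝ) (hq : q ≠ 0)
    (x₀ y₀ : ℝ) (hb : BoundedNear p q (x₀, y₀)) {ι : Type*} [Fintype ι] (φ : ι → ℝ) (ee : ι → ℚ)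
    (hee : ∀ k, 0 < ee k) (e : ℝ) (hirr : Irrational e) (he : 0 < e) :
    let g : ℝ → ℝ := fun x =>
      y₀ + (∑ k, φ k * |x - x₀| ^ ((ee k : ℝ))) + |x - x₀| ^ e
    (∀ᶠ x in 𝓝[>] x₀, pev q (x, g x) ≠ 0) ∧
    (∀ᶠ x in 𝓝[<] x₀, pev q (x, g x) ≠ 0) ∧
    (∃ L : ℝ, Tendsto (fun x => pev p (x, g x) / pev q (x, g x)) (𝓝[>] x₀) (𝓝 L)) ∧
    (∃ L : ℝ, Tendsto (fun x => pev p (x, g x) / pev q (x, g x)) (𝓝[<] x₀) (𝓝 L)) := by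
  have hright : ∀ᶠ x in 𝓝[>] x₀, x₀ + 1 * |x - x₀| = x := by
    filter_upwards [self_mem_nhdsWithin] with x (hx : x₀ < x)
    rw [abs_of_pos (sub_pos.mpr hx), one_mul, add_sub_cancel]
  have hleft : ∀ᶠ x in 𝓝[<] x₀, x₀ + -1 * |x - x₀| = x := by
    filter_upwards [self_mem_nhdsWithin] with x (hx : x < x₀)
    rw [abs_of_neg (sub_neg.mpr hx), neg_one_mul, neg_neg, add_sub_cancel]
  obtain ⟨hqR, hlimR⟩ :=
    hb.convergesAlong_rpow_curve hq φ hee hirr he one_ne_zero (nhdsGT_le_nhdsNE x₀) hright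
  obtain ⟨hqL, hlimL⟩ := hb.convergesAlong_rpow_curve hq φ hee hirr he
    (neg_ne_zero.mpr one_ne_zero) (nhdsLT_le_nhdsNE x₀) hleft
  exact ⟨hqR, hqL, hlimR, hlimL⟩

/-- Along the curve `y = y₀ + Φ(x-x₀) + |x-x₀|^e` with `Φ` of type (i) and `e` irrational
(`e ≥ 1`, `e ≥ e_N`), the denominator is eventually nonzero on each side and the one-sided
limits of a rational function bounded near `(x₀,y₀)` exist and are finite. -/
theorem irrational_exponent_curve_limits (p q : MvPolynomial (Fin 2) ℝ) (hq : q ≠ 0)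
    (hcop : ∀ d : MvPolynomial (Fin 2) ℝ, d ∣ p → d ∣ q → IsUnit d) (x₀ y₀ : ℝ)
    (hb : BoundedNear p q (x₀, y₀))
    (N : ℕ) (φ : Fin N → ℝ) (ee : Fin N → ℚ)
    (hφ : ∀ k, φ k ≠ 0) (hee : StrictMono ee) (h1 : ∀ k, 1 ≤ ee k)
    (e : ℝ) (hirr : Irrational e) (he1 : 1 ≤ e) (heN : ∀ k, (ee k : ℝ) ≤ e) :
    let g : ℝ → ℝ := fun x =>
      y₀ + (∑ k, φ k * |x - x₀| ^ ((ee k : ℝ))) + |x - x₀| ^ e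
    (∀ᶠ x in 𝓝[>] x₀, pev q (x, g x) ≠ 0) ∧
    (∀ᶠ x in 𝓝[<] x₀, pev q (x, g x) ≠ 0) ∧
    (∃ L : ℝ, Tendsto (fun x => pev p (x, g x) / pev q (x, g x)) (𝓝[>] x₀) (𝓝 L)) ∧
    (∃ L : ℝ, Tendsto (fun x => pev p (x, g x) / pev q (x, g x)) (𝓝[<] x₀) (𝓝 L)) :=
  irrational_exponent_curve_limits_general p q hq x₀ y₀ hb φ ee (fun k => one_pos.trans_le (h1 k))
    e hirr (one_pos.trans_le he1)
end

section
/- Let f = p/q be a rational function of two real variables bounded near (x₀,y₀). Let Φ(t) = Σ_{k=1}^N φ_k |t|^{e_k} be a function of type (i) (N ≥ 0) and let e be a rational number with e ≥ 1 and, if N ≥ 1, e ≥ e_N. Define g(x) = y₀ + Φ(x−x₀) + |x−x₀|^e / ln|x−x₀| for x ≠ x₀. Then both one-sided limits lim_{x→x₀⁺} f(x, g(x)) and lim_{x→x₀⁻} f(x, g(x)) exist and are finite (the curve eventually avoids the zero set of q on each side). -/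
open MvPolynomial Filter Topology

/-!
Put `w = log |x - x₀|`. On each side of `x₀` the curve is `x = x₀ ± exp w`,
`y = y₀ + ∑ φ k * exp (ε k * w) + exp (e * w) / w` with `w → -∞`, so every polynomial restricted
to it is a finite sum of monomials `exp (a * w) / w ^ n`. Ordered lexicographically by `(a, n)`,
these monomials form an asymptotic scale: a nonzero formal sum is equivalent to its leading term.
Comparing the leading terms of `p` and `q`, boundedness of `p / q` rules out that the one of `q` is
negligible, and in the remaining cases the quotient converges. The formal sum attached to `q` is
nonzero because replacing `1 / w` by a free variable `z` turns the curve into a parametrization of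
a half-plane, on which `q` cannot vanish identically.
-/

open Asymptotics AddMonoidAlgebra

section AsymptoticScale

variable {α Γ 𝕜 : Type*} [NormedField 𝕜] [LinearOrder Γ] {l : Filter α} {m : Γ → α → 𝕜}

/-- The functions `m i` form an asymptotic scale along `l`, indexed so that smaller indices
dominate; finite linear combinations of them are compared through their leading terms. -/
structure IsAsymptoticScale (l : Filter α) (m : Γ → α → 𝕜) : Prop where
  eventually_ne_zero : ∀ i, ∀ᶠ x in l, m i x ≠ 0
  isLittleO_of_lt : ∀ ⦃i j⦄, i < j → m j =o[l] m i

namespace IsAsymptoticScale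

theorem exists_isEquivalent_finsuppSum (hm : IsAsymptoticScale l m) {c : Γ →₀ 𝕜} (hc : c ≠ 0) :
    ∃ i, ∃ a ≠ 0, (fun x => c.sum fun j b => b * m j x) ~[l] fun x => a * m i x := by
  have hs : c.support.Nonempty := Finsupp.support_nonempty_iff.2 hc
  set i := c.support.min' hs
  have hi : i ∈ c.support := c.support.min'_mem hs
  refine ⟨i, c i, Finsupp.mem_support_iff.1 hi, ?_⟩
  have hrest : (fun x => ∑ j ∈ c.support.erase i, c j * m j x) =o[l] fun x => c i * m i x := by
    refine IsLittleO.fun_sum fun j hj => ?_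
    have hij : i < j := c.support.min'_lt_of_mem_erase_min' hs hj
    exact ((hm.isLittleO_of_lt hij).const_mul_left _).const_mul_right
      (Finsupp.mem_support_iff.1 hi)
  refine (IsEquivalent.refl.add_isLittleO hrest).congr_left (.of_forall fun x => ?_)
  exact Finset.add_sum_erase _ (fun j => c j * m j x) hi

theorem exists_isEquivalent_lift [AddMonoid Γ] {χ : α → Multiplicative Γ →* 𝕜}
    (hχ : IsAsymptoticScale l fun i x => χ x (.ofAdd i)) {R : 𝕜[Γ]} (hR : R ≠ 0) :
    ∃ i, ∃ a ≠ 0, (fun x => lift 𝕜 𝕜 Γ (χ x) R) ~[l] fun x => a * χ x (.ofAdd i) := by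
  simp only [AddMonoidAlgebra.lift_apply, smul_eq_mul]
  exact hχ.exists_isEquivalent_finsuppSum (AddMonoidAlgebra.coeff_eq_zero.not.2 hR)

theorem exists_tendsto_div_of_isBigO [l.NeBot] (hm : IsAsymptoticScale l m) {f g : α → 𝕜}
    {i j : Γ} {a b : 𝕜} (ha : a ≠ 0) (hb : b ≠ 0) (hf : f ~[l] fun x => a * m i x)
    (hg : g ~[l] fun x => b * m j x) (hfg : f =O[l] g) :
    ∃ L, Tendsto (fun x => f x / g x) l (𝓝 L) := by
  have hfm : f =Θ[l] m i := hf.isTheta.trans (isTheta_rfl.const_mul_left ha)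
  have hgm : g =Θ[l] m j := hg.isTheta.trans (isTheta_rfl.const_mul_left hb)
  rcases lt_trichotomy i j with hij | rfl | hji
  · exact absurd ((hm.isLittleO_of_lt hij).trans_isBigO (hfm.2.trans (hfg.trans hgm.1)))
      (isLittleO_irrefl (hm.eventually_ne_zero j).frequently)
  · refine ⟨a / b, (hf.div hg).symm.tendsto_nhds (tendsto_const_nhds.congr' ?_)⟩
    filter_upwards [hm.eventually_ne_zero i] with x hx
    exact (mul_div_mul_right a b hx).symm
  · exact ⟨0, (hfm.1.trans_isLittleO ((hm.isLittleO_of_lt hji).trans_isBigO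
      hgm.2)).tendsto_div_nhds_zero⟩

end IsAsymptoticScale

end AsymptoticScale

section RationalFunction

theorem eq_zero_of_pev_eq_zero_on_prod {p : MvPolynomial (Fin 2) ℝ} {S T : Set ℝ}
    (hS : S.Infinite) (hT : T.Infinite) (h : ∀ x ∈ S, ∀ y ∈ T, pev p (x, y) = 0) : p = 0 := by
  refine MvPolynomial.funext_set ![S, T] (Fin.forall_fin_two.2 ⟨hS, hT⟩) fun v hv => ?_
  have hv' : v = ![v 0, v 1] := by ext i; fin_cases i <;> rfl
  rw [hv', map_zero]
  exact h _ (hv 0 trivial) _ (hv 1 trivial)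

theorem map_aeval_eq_pev {R : Type*} [CommSemiring R] [Algebra ℝ R] (F : R →ₐ[ℝ] ℝ) (A B : R)
    (p : MvPolynomial (Fin 2) ℝ) : F (aeval ![A, B] p) = pev p (F A, F B) := by
  have hcomp : (fun i => F (![A, B] i)) = ![F A, F B] := by ext i; fin_cases i <;> rfl
  rw [comp_aeval_apply, hcomp, aeval_eq_eval]
  rfl

/-- The rational function `p / q` is eventually defined along `γ` and has a finite limit there.
The first part excludes the junk value `p / q = 0` at zeros of `q`. -/
def HasLimitAlong {α : Type*} (p q : MvPolynomial (Fin 2) ℝ) (l : Filter α) (γ : α → ℝ × ℝ) :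
    Prop :=
  (∀ᶠ x in l, pev q (γ x) ≠ 0) ∧ ∃ L : ℝ, Tendsto (fun x => pev p (γ x) / pev q (γ x)) l (𝓝 L)

variable {α β : Type*} {p q : MvPolynomial (Fin 2) ℝ} {v₀ : ℝ × ℝ} {l : Filter α}
  {γ γ' : α → ℝ × ℝ}

theorem HasLimitAlong.comp_tendsto (h : HasLimitAlong p q l γ) {k : Filter β} {f : β → α}
    (hf : Tendsto f k l) : HasLimitAlong p q k (γ ∘ f) :=
  ⟨hf.eventually h.1, h.2.imp fun _ hL => hL.comp hf⟩

theorem HasLimitAlong.congr' (h : HasLimitAlong p q l γ) (hγ : γ =ᶠ[l] γ') :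
    HasLimitAlong p q l γ' :=
  ⟨h.1.congr (hγ.mono fun x hx => by rw [hx]),
    h.2.imp fun _ hL => hL.congr' (hγ.mono fun x hx => by simp only [hx])⟩

theorem BoundedNear.isBigO_comp (hb : BoundedNear p q v₀) (hγ : Tendsto γ l (𝓝 v₀))
    (hq : ∀ᶠ x in l, pev q (γ x) ≠ 0) : (fun x => pev p (γ x)) =O[l] fun x => pev q (γ x) := by
  obtain ⟨U, hU, M, hM⟩ := hb
  refine IsBigO.of_bound M ?_
  filter_upwards [hγ hU, hq] with x hxU hqx
  simpa [abs_div, div_le_iff₀ (abs_pos.2 hqx)] using hM _ hxU hqx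

theorem BoundedNear.hasLimitAlong_of_isAsymptoticScale {Γ : Type*} [AddCommMonoid Γ]
    [LinearOrder Γ] [l.NeBot] (hb : BoundedNear p q v₀) {χ : α → Multiplicative Γ →* ℝ}
    (hχ : IsAsymptoticScale l fun i x => χ x (.ofAdd i)) {A B : ℝ[Γ]}
    (hAB : Tendsto (fun x => (lift ℝ ℝ Γ (χ x) A, lift ℝ ℝ Γ (χ x) B)) l (𝓝 v₀))
    (hq : aeval ![A, B] q ≠ 0) :
    HasLimitAlong p q l fun x => (lift ℝ ℝ Γ (χ x) A, lift ℝ ℝ Γ (χ x) B) := by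
  have hp_eq (x : α) := map_aeval_eq_pev (lift ℝ ℝ Γ (χ x)) A B p
  have hq_eq (x : α) := map_aeval_eq_pev (lift ℝ ℝ Γ (χ x)) A B q
  obtain ⟨j, b, hb0, hqj⟩ := hχ.exists_isEquivalent_lift hq
  have hq0 : ∀ᶠ x in l, pev q (lift ℝ ℝ Γ (χ x) A, lift ℝ ℝ Γ (χ x) B) ≠ 0 := by
    filter_upwards [hqj.isBigO_symm.eq_zero_imp, hχ.eventually_ne_zero j] with x hx hj h0
    exact mul_ne_zero hb0 hj (hx ((hq_eq x).trans h0))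
  refine ⟨hq0, ?_⟩
  have hpq := hb.isBigO_comp hAB hq0
  simp only [← hp_eq, ← hq_eq] at hpq ⊢
  by_cases hp : aeval ![A, B] p = 0
  · exact ⟨0, by simp [hp]⟩
  · obtain ⟨i, a, ha0, hpi⟩ := hχ.exists_isEquivalent_lift hp
    exact hχ.exists_tendsto_div_of_isBigO ha0 hb0 hpi hqj hpq

end RationalFunction

section ExpMonomial

/-- The monomial `exp (a * w) * z ^ n` with exponent `(a, n)`, evaluated at `w` and `z`. At
`w = log t` and `z = w⁻¹` it is `t ^ a / (log t) ^ n`; keeping `w` and `z` independent allows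
identities between formal sums of monomials to be tested on an open set of points. -/
noncomputable def expMonomial (w z : ℝ) : Multiplicative (ℝ ×ₗ ℕ) →* ℝ where
  toFun i := Real.exp ((ofLex i.toAdd).1 * w) * z ^ (ofLex i.toAdd).2
  map_one' := by simp
  map_mul' i j := by
    simp only [toAdd_mul, ofLex_add, Prod.fst_add, Prod.snd_add, add_mul, Real.exp_add, pow_add]
    ring

theorem expMonomial_ofAdd_toLex (w z a : ℝ) (n : ℕ) :
    expMonomial w z (.ofAdd (toLex (a, n))) = Real.exp (a * w) * z ^ n :=
  rfl

theorem isLittleO_exp_mul_inv_pow_atBot {b : ℝ} (hb : 0 < b) (n : ℕ) :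
    (fun w : ℝ => Real.exp (b * w)) =o[atBot] fun w => w⁻¹ ^ n := by
  have hpow : (fun w : ℝ => (-w) ^ n) =o[atBot] fun w => Real.exp (b * -w) :=
    (isLittleO_pow_exp_pos_mul_atTop n hb).comp_tendsto tendsto_neg_atBot_atTop
  have hinv := hpow.inv_rev <| (eventually_ne_atBot 0).mono fun w hw h =>
    absurd h (pow_ne_zero n (neg_ne_zero.2 hw))
  refine (hinv.congr_left fun w => ?_).trans_isBigO (isBigO_of_le _ fun w => ?_)
  · rw [← Real.exp_neg, mul_neg, neg_neg]
  · simp only [norm_inv, norm_pow, norm_neg, inv_pow, le_refl]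

theorem isAsymptoticScale_expMonomial :
    IsAsymptoticScale atBot fun i w => expMonomial w w⁻¹ (.ofAdd i) where
  eventually_ne_zero i := by
    filter_upwards [eventually_ne_atBot 0] with w hw
    exact mul_ne_zero (Real.exp_ne_zero _) (pow_ne_zero _ (inv_ne_zero hw))
  isLittleO_of_lt := by
    intro i j hij
    obtain ⟨a, n⟩ := i
    obtain ⟨b, k⟩ := j
    have hinv : Tendsto (fun w : ℝ => w⁻¹) atBot (𝓝 0) := tendsto_inv_atBot_zero
    rcases Prod.Lex.toLex_lt_toLex.1 hij with hab | ⟨rfl, hnk⟩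
    · have hbdd : (fun w : ℝ => w⁻¹ ^ k) =O[atBot] fun _ => (1 : ℝ) := (hinv.pow k).isBigO_one ℝ
      refine ((isLittleO_exp_mul_inv_pow_atBot (sub_pos.2 hab) n).mul_isBigO
        ((isBigO_refl (fun w => Real.exp (a * w)) atBot).mul hbdd)).congr (fun w => ?_) fun w => ?_
      · rw [← mul_assoc, ← Real.exp_add, ← add_mul, sub_add_cancel]
        rfl
      · rw [mul_one, mul_comm]
        rfl
    · exact (isBigO_refl (fun w => Real.exp (a * w)) atBot).mul_isLittleO
        ((isLittleO_pow_pow hnk).comp_tendsto hinv)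

theorem tendsto_expMonomial_zero_of_pos {i : ℝ ×ₗ ℕ} (hi : 0 < i) :
    Tendsto (fun w => expMonomial w w⁻¹ (.ofAdd i)) atBot (𝓝 0) := by
  simpa using (isAsymptoticScale_expMonomial.isLittleO_of_lt hi).tendsto_div_nhds_zero

end ExpMonomial

section LogCurve

variable {ι : Type*} [Fintype ι]

/-- The curve `y = y₀ + ∑ φ k * t ^ ε k + t ^ e / log t` over `x = x₀ + s * t`, in the parameter
`w = log t`. -/
noncomputable def logCurve (x₀ y₀ s : ℝ) (φ ε : ι → ℝ) (e w : ℝ) : ℝ × ℝ :=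
  (x₀ + s * Real.exp w, y₀ + ∑ k, φ k * Real.exp (ε k * w) + Real.exp (e * w) * w⁻¹)

/-- The abscissa of `logCurve` as a formal sum of the monomials `expMonomial`. -/
noncomputable def logCurveFst (x₀ s : ℝ) : ℝ[ℝ ×ₗ ℕ] :=
  algebraMap ℝ _ x₀ + single (toLex (1, 0)) s

/-- The ordinate of `logCurve` as a formal sum of the monomials `expMonomial`. -/
noncomputable def logCurveSnd (y₀ : ℝ) (φ ε : ι → ℝ) (e : ℝ) : ℝ[ℝ ×ₗ ℕ] :=
  algebraMap ℝ _ y₀ + ∑ k, single (toLex (ε k, 0)) (φ k) + single (toLex (e, 1)) 1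

theorem lift_expMonomial_logCurveFst (w z x₀ s : ℝ) :
    lift ℝ ℝ _ (expMonomial w z) (logCurveFst x₀ s) = x₀ + s * Real.exp w := by
  simp [logCurveFst, lift_single, expMonomial_ofAdd_toLex]

theorem lift_expMonomial_logCurveSnd (w z y₀ : ℝ) (φ ε : ι → ℝ) (e : ℝ) :
    lift ℝ ℝ _ (expMonomial w z) (logCurveSnd y₀ φ ε e) =
      y₀ + ∑ k, φ k * Real.exp (ε k * w) + Real.exp (e * w) * z := by
  simp [logCurveSnd, lift_single, expMonomial_ofAdd_toLex]

theorem aeval_logCurve_ne_zero {q : MvPolynomial (Fin 2) ℝ} (hq : q ≠ 0) (x₀ y₀ : ℝ) {s : ℝ}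
    (hs : s ≠ 0) (φ ε : ι → ℝ) (e : ℝ) :
    aeval ![logCurveFst x₀ s, logCurveSnd y₀ φ ε e] q ≠ 0 := by
  intro h0
  have hinj : Function.Injective fun w => x₀ + s * Real.exp w :=
    (add_right_injective x₀).comp ((mul_right_injective₀ hs).comp Real.exp_injective)
  refine hq (eq_zero_of_pev_eq_zero_on_prod (Set.infinite_range_of_injective hinj)
    Set.infinite_univ ?_)
  rintro _ ⟨w, rfl⟩ y -
  -- This value of `z` moves the point to ordinate `y` without changing its abscissa.
  have hpev := map_aeval_eq_pev (lift ℝ ℝ _ (expMonomial w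
    ((y - y₀ - ∑ k, φ k * Real.exp (ε k * w)) / Real.exp (e * w)))) (logCurveFst x₀ s)
    (logCurveSnd y₀ φ ε e) q
  rw [h0, map_zero, lift_expMonomial_logCurveFst, lift_expMonomial_logCurveSnd,
    mul_div_cancel₀ _ (Real.exp_ne_zero _)] at hpev
  rw [hpev, sub_sub, add_sub_cancel]

theorem tendsto_logCurve (x₀ y₀ s : ℝ) (φ : ι → ℝ) {ε : ι → ℝ} (hε : ∀ k, 0 < ε k) {e : ℝ}
    (he : 0 ≤ e) : Tendsto (logCurve x₀ y₀ s φ ε e) atBot (𝓝 (x₀, y₀)) := by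
  have hexp {a : ℝ} (ha : 0 < a) : Tendsto (fun w => Real.exp (a * w)) atBot (𝓝 0) :=
    Real.tendsto_exp_atBot.comp (tendsto_id.const_mul_atBot ha)
  have hlog : Tendsto (fun w => Real.exp (e * w) * w⁻¹) atBot (𝓝 0) := by
    have hpos : (0 : ℝ ×ₗ ℕ) < toLex (e, 1) :=
      Prod.Lex.toLex_lt_toLex.2 (he.lt_or_eq.imp_right fun h => ⟨h, one_pos⟩)
    simpa [expMonomial_ofAdd_toLex] using tendsto_expMonomial_zero_of_pos hpos
  have hsum := tendsto_finsetSum Finset.univ fun k _ => (hexp (hε k)).const_mul (φ k)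
  simpa [logCurve] using! ((Real.tendsto_exp_atBot.const_mul s).const_add x₀).prodMk_nhds
    ((hsum.const_add y₀).add hlog)

theorem BoundedNear.hasLimitAlong_logCurve {p q : MvPolynomial (Fin 2) ℝ} (hq : q ≠ 0)
    {x₀ y₀ s : ℝ} (hb : BoundedNear p q (x₀, y₀)) (hs : s ≠ 0) (φ : ι → ℝ) {ε : ι → ℝ}
    (hε : ∀ k, 0 < ε k) {e : ℝ} (he : 0 ≤ e) :
    HasLimitAlong p q atBot (logCurve x₀ y₀ s φ ε e) := by
  have hlift (w : ℝ) : (lift ℝ ℝ _ (expMonomial w w⁻¹) (logCurveFst x₀ s),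
      lift ℝ ℝ _ (expMonomial w w⁻¹) (logCurveSnd y₀ φ ε e)) = logCurve x₀ y₀ s φ ε e w := by
    rw [lift_expMonomial_logCurveFst, lift_expMonomial_logCurveSnd, logCurve]
  have hlim := hb.hasLimitAlong_of_isAsymptoticScale isAsymptoticScale_expMonomial
    (A := logCurveFst x₀ s) (B := logCurveSnd y₀ φ ε e)
  simp only [hlift] at hlim
  exact hlim (tendsto_logCurve x₀ y₀ s φ hε he) (aeval_logCurve_ne_zero hq x₀ y₀ hs φ ε e)

theorem logCurve_log_abs_sub {x x₀ s : ℝ} (hx : x ≠ x₀) (hxs : x - x₀ = s * |x - x₀|) (y₀ : ℝ)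
    (φ ε : ι → ℝ) (e : ℝ) :
    logCurve x₀ y₀ s φ ε e (Real.log |x - x₀|) =
      (x, y₀ + (∑ k, φ k * |x - x₀| ^ ε k) + |x - x₀| ^ e / Real.log |x - x₀|) := by
  have hpos : 0 < |x - x₀| := abs_pos.2 (sub_ne_zero.2 hx)
  have hexp (a : ℝ) : Real.exp (a * Real.log |x - x₀|) = |x - x₀| ^ a := by
    rw [Real.rpow_def_of_pos hpos, mul_comm]
  simp only [logCurve, hexp, Real.exp_log hpos, ← hxs, add_sub_cancel, div_eq_mul_inv]

theorem tendsto_log_abs_sub_nhdsNE (x₀ : ℝ) :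
    Tendsto (fun x => Real.log |x - x₀|) (𝓝[≠] x₀) atBot := by
  have hsub : Tendsto (fun x => x - x₀) (𝓝[≠] x₀) (𝓝[≠] 0) := by
    have hcont : Continuous fun x => x - x₀ := by fun_prop
    exact sub_self x₀ ▸ hcont.continuousWithinAt.tendsto_nhdsWithin
      fun x hx => by simpa [sub_eq_zero] using hx
  simpa only [Real.log_abs, Function.comp_def] using Real.tendsto_log_nhdsNE_zero.comp hsub

theorem BoundedNear.hasLimitAlong_log_quotient {p q : MvPolynomial (Fin 2) ℝ} (hq : q ≠ 0)
    {x₀ y₀ : ℝ} (hb : BoundedNear p q (x₀, y₀)) (φ : ι → ℝ) {ε : ι → ℝ} (hε : ∀ k, 0 < ε k)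
    {e : ℝ} (he : 0 ≤ e) {s : ℝ} (hs : s ≠ 0) {l : Filter ℝ} (hl : l ≤ 𝓝[≠] x₀)
    (hls : ∀ᶠ x in l, x - x₀ = s * |x - x₀|) :
    HasLimitAlong p q l fun x =>
      (x, y₀ + (∑ k, φ k * |x - x₀| ^ ε k) + |x - x₀| ^ e / Real.log |x - x₀|) := by
  refine ((hb.hasLimitAlong_logCurve hq hs φ hε he).comp_tendsto
    ((tendsto_log_abs_sub_nhdsNE x₀).mono_left hl)).congr' ?_
  filter_upwards [hl eventually_mem_nhdsWithin, hls] with x hx hxs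
  exact logCurve_log_abs_sub hx hxs y₀ φ ε e

end LogCurve

theorem log_quotient_curve_limits_general {ι : Type*} [Fintype ι] {p q : MvPolynomial (Fin 2) ℝ}
    (hq : q ≠ 0) {x₀ y₀ : ℝ} (hb : BoundedNear p q (x₀, y₀)) (φ : ι → ℝ) {ε : ι → ℝ}
    (hε : ∀ k, 0 < ε k) {e : ℝ} (he : 0 ≤ e) :
    let g : ℝ → ℝ := fun x =>
      y₀ + (∑ k, φ k * |x - x₀| ^ ε k) + |x - x₀| ^ e / Real.log |x - x₀|
    (∀ᶠ x in 𝓝[>] x₀, pev q (x, g x) ≠ 0) ∧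
    (∀ᶠ x in 𝓝[<] x₀, pev q (x, g x) ≠ 0) ∧
    (∃ L : ℝ, Tendsto (fun x => pev p (x, g x) / pev q (x, g x)) (𝓝[>] x₀) (𝓝 L)) ∧
    (∃ L : ℝ, Tendsto (fun x => pev p (x, g x) / pev q (x, g x)) (𝓝[<] x₀) (𝓝 L)) := by
  intro g
  have hright : HasLimitAlong p q (𝓝[>] x₀) fun x => (x, g x) :=
    hb.hasLimitAlong_log_quotient hq φ hε he one_ne_zero (nhdsGT_le_nhdsNE x₀) <|
      eventually_mem_nhdsWithin.mono fun x hx => by rw [abs_of_pos (sub_pos.2 hx), one_mul]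
  have hleft : HasLimitAlong p q (𝓝[<] x₀) fun x => (x, g x) :=
    hb.hasLimitAlong_log_quotient hq φ hε he (neg_ne_zero.2 one_ne_zero) (nhdsLT_le_nhdsNE x₀) <|
      eventually_mem_nhdsWithin.mono fun x hx => by
        rw [abs_of_neg (sub_neg.2 hx), neg_mul_neg, one_mul]
  exact ⟨hright.1, hleft.1, hright.2, hleft.2⟩

/-- Along the curve `y = y₀ + Φ(x-x₀) + |x-x₀|^e / ln|x-x₀|` with `Φ` of type (i) and
`e` rational (`e ≥ 1`, `e ≥ e_N`), the denominator is eventually nonzero on each side and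
the one-sided limits of a rational function bounded near `(x₀,y₀)` exist and are finite. -/
theorem log_quotient_curve_limits (p q : MvPolynomial (Fin 2) ℝ) (hq : q ≠ 0)
    (hcop : ∀ d : MvPolynomial (Fin 2) ℝ, d ∣ p → d ∣ q → IsUnit d) (x₀ y₀ : ℝ)
    (hb : BoundedNear p q (x₀, y₀))
    (N : ℕ) (φ : Fin N → ℝ) (ee : Fin N → ℚ)
    (hφ : ∀ k, φ k ≠ 0) (hee : StrictMono ee) (h1 : ∀ k, 1 ≤ ee k)
    (e : ℚ) (he1 : 1 ≤ e) (heN : ∀ k, ee k ≤ e) :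
    let g : ℝ → ℝ := fun x =>
      y₀ + (∑ k, φ k * |x - x₀| ^ ((ee k : ℝ))) + |x - x₀| ^ ((e : ℝ)) / Real.log |x - x₀|
    (∀ᶠ x in 𝓝[>] x₀, pev q (x, g x) ≠ 0) ∧
    (∀ᶠ x in 𝓝[<] x₀, pev q (x, g x) ≠ 0) ∧
    (∃ L : ℝ, Tendsto (fun x => pev p (x, g x) / pev q (x, g x)) (𝓝[>] x₀) (𝓝 L)) ∧
    (∃ L : ℝ, Tendsto (fun x => pev p (x, g x) / pev q (x, g x)) (𝓝[<] x₀) (𝓝 L)) :=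
  log_quotient_curve_limits_general hq hb φ
    (fun k => by exact_mod_cast zero_lt_one.trans_le (h1 k))
    (by exact_mod_cast zero_le_one.trans he1)
end

section
/- Let f = p/q be a rational function of two real variables bounded near (x₀,y₀), let Σ_{k=1}^∞ φ_k |t|^{e_k} be a series of type (ii) with partial sums Φ_N, and for each N ≥ 1 let L_N = lim_{x→x₀⁺} f(x, y₀+Φ_N(x−x₀)) (these one-sided limits exist and are finite). Then the sequence (L_N)_{N≥1} converges to a finite limit as N → ∞. -/
open MvPolynomial Filter Topology

/-!
Write `T = x - x₀` and regard the whole series `Φ = ∑ φ k T^(e k)` as a Hahn series; no convergence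
is needed, and the exponents may be bounded. The partial sum `Φ_N` differs from `Φ` by a Hahn series
with leading term `-φ_N T^(e N)`. Taylor expansion at `Φ` of a nonzero polynomial `G` over the Hahn
series field gives `G(Φ_N) = ∑ i, g_i (Φ_N - Φ)^i` with `g_i` independent of `N`. The orders of the
summands are affine functions `w_i + i e_N` with distinct slopes, so for large `N` a single index
`m` dominates and `G(Φ_N)` has leading term `c (-φ_N)^m T^(w + m e_N)`, with `c`, `w`, `m`
independent of `N`. Applied to numerator and denominator: either `w` and `m` agree and
the limit along the `N`-th curve is the quotient of the two constants `c`, or the two orders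
differ for large `N` and a finite limit can only be `0`.
-/

section EventualComparison

lemma exists_eventually_forall_lt {α β ι : Type*} [LinearOrder α] {l : Filter β} [l.NeBot]
    {s : Finset ι} (hs : s.Nonempty) {g : ι → β → α}
    (hg : ∀ i ∈ s, ∀ j ∈ s, i ≠ j → (∀ᶠ b in l, g i b < g j b) ∨ ∀ᶠ b in l, g j b < g i b) :
    ∃ m ∈ s, ∀ᶠ b in l, ∀ i ∈ s, i ≠ m → g m b < g i b := by
  have settled : ∀ᶠ b in l, ∀ i ∈ s, ∀ j ∈ s, (∀ᶠ b' in l, g i b' < g j b') → g i b < g j b := by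
    simp only [eventually_all_finset, eventually_imp_distrib_left]
    exact fun i _ j _ h => h
  obtain ⟨b, hb⟩ := settled.exists
  obtain ⟨m, hm, hmin⟩ := s.exists_min_image (g · b) hs
  simp only [eventually_all_finset, eventually_imp_distrib_left]
  refine ⟨m, hm, fun i hi him => ?_⟩
  exact (hg i hi m hm him).resolve_left fun h => (hb i hi m hm h).not_ge (hmin i hi)

variable {Γ ι : Type*} [AddCommGroup Γ] [LinearOrder Γ] [IsOrderedAddMonoid Γ]
  [LinearOrder ι] [NoMaxOrder ι] {e : ι → Γ}

lemma eventually_add_nsmul_lt_or_gt_of_lt (he : StrictMono e) (u v : Γ) {m n : ℕ} (hmn : m < n) :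
    (∀ᶠ N in atTop, u + m • e N < v + n • e N) ∨ ∀ᶠ N in atTop, v + n • e N < u + m • e N := by
  obtain ⟨k, rfl⟩ := Nat.exists_eq_add_of_lt hmn
  have gap_mono : StrictMono fun N => (v + (m + k + 1) • e N) - (u + m • e N) := fun M N hMN => by
    have : (k + 1) • e M < (k + 1) • e N := nsmul_lt_nsmul_right k.succ_ne_zero (he hMN)
    have gap_eq (N) : (v + (m + k + 1) • e N) - (u + m • e N) = v - u + (k + 1) • e N := by
      rw [add_assoc m, add_nsmul]; abel
    simpa only [gap_eq, add_lt_add_iff_left] using this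
  by_cases hgap : ∃ N, u + m • e N ≤ v + (m + k + 1) • e N
  · obtain ⟨N, hN⟩ := hgap
    refine .inl ((eventually_gt_atTop N).mono fun M hM => ?_)
    exact sub_pos.1 ((sub_nonneg.2 hN).trans_lt (gap_mono hM))
  · exact .inr (.of_forall fun N => not_le.1 fun hN => hgap ⟨N, hN⟩)

lemma eventually_add_nsmul_lt_or_gt (he : StrictMono e) {u v : Γ} {m n : ℕ}
    (h : (u, m) ≠ (v, n)) :
    (∀ᶠ N in atTop, u + m • e N < v + n • e N) ∨ ∀ᶠ N in atTop, v + n • e N < u + m • e N := by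
  rcases lt_trichotomy m n with hmn | rfl | hmn
  · exact eventually_add_nsmul_lt_or_gt_of_lt he u v hmn
  · have huv : u ≠ v := by rintro rfl; exact h rfl
    simp only [add_lt_add_iff_right]
    exact huv.lt_or_gt.imp (fun h => .of_forall fun _ => h) (fun h => .of_forall fun _ => h)
  · exact (eventually_add_nsmul_lt_or_gt_of_lt he v u hmn).symm

end EventualComparison

/-- The Hahn series `x` is `a T^w` plus terms of higher order, with `a ≠ 0` (as `x.orderTop = w`
is finite). -/
structure HasLeadingTerm {Γ R : Type*} [LinearOrder Γ] [Zero R] (x : HahnSeries Γ R) (w : Γ)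
    (a : R) : Prop where
  orderTop_eq : x.orderTop = w
  leadingCoeff_eq : x.leadingCoeff = a

namespace HasLeadingTerm

variable {Γ R : Type*} [LinearOrder Γ]

section Zero

variable [Zero R] {x : HahnSeries Γ R} {v w : Γ} {a : R}

lemma coeff_eq (hx : HasLeadingTerm x w a) : x.coeff w = a := by
  have := hx.leadingCoeff_eq
  rwa [HahnSeries.leadingCoeff, hx.orderTop_eq, WithTop.recTopCoe_coe] at this

lemma coeff_eq_zero_of_lt (hx : HasLeadingTerm x w a) (hv : v < w) : x.coeff v = 0 :=
  HahnSeries.coeff_eq_zero_of_lt_orderTop (hx.orderTop_eq ▸ WithTop.coe_lt_coe.2 hv)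

lemma ne_zero (hx : HasLeadingTerm x w a) : a ≠ 0 :=
  hx.coeff_eq ▸ HahnSeries.coeff_orderTop_ne hx.orderTop_eq

lemma of_coeff (hw : x.coeff w = a) (ha : a ≠ 0) (hlt : ∀ v < w, x.coeff v = 0) :
    HasLeadingTerm x w a := by
  have horder : x.orderTop = w := le_antisymm (HahnSeries.orderTop_le_of_coeff_ne_zero (hw ▸ ha))
    (HahnSeries.le_orderTop_iff_forall.2 fun v hv => hlt v (WithTop.coe_lt_coe.1 hv))
  exact ⟨horder, by rw [HahnSeries.leadingCoeff, horder, WithTop.recTopCoe_coe, hw]⟩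

lemma order_leadingCoeff [Zero Γ] (hx : x ≠ 0) : HasLeadingTerm x x.order x.leadingCoeff :=
  ⟨(HahnSeries.order_eq_orderTop_of_ne_zero hx).symm, rfl⟩

end Zero

lemma sum_of_lt [AddCommMonoid R] {ι : Type*} {s : Finset ι} {x : ι → HahnSeries Γ R} {w : ι → Γ}
    {a : ι → R} {m : ι} (hm : m ∈ s) (hx : ∀ i ∈ s, HasLeadingTerm (x i) (w i) (a i))
    (hlt : ∀ i ∈ s, i ≠ m → w m < w i) :
    HasLeadingTerm (∑ i ∈ s, x i) (w m) (a m) := by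
  refine of_coeff ?_ (hx m hm).ne_zero fun v hv => ?_
  · rw [HahnSeries.coeff_sum, Finset.sum_eq_single_of_mem m hm fun i hi him =>
      (hx i hi).coeff_eq_zero_of_lt (hlt i hi him), (hx m hm).coeff_eq]
  · have w_min : ∀ i ∈ s, w m ≤ w i := fun i hi => by
      rcases eq_or_ne i m with rfl | him
      exacts [le_rfl, (hlt i hi him).le]
    rw [HahnSeries.coeff_sum]
    exact Finset.sum_eq_zero fun i hi => (hx i hi).coeff_eq_zero_of_lt (hv.trans_le (w_min i hi))

section Mul

variable [AddCommMonoid Γ] [IsOrderedCancelAddMonoid Γ] [Semiring R] [NoZeroDivisors R]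
  {x y : HahnSeries Γ R} {v w : Γ} {a b : R}

lemma mul (hx : HasLeadingTerm x v a) (hy : HasLeadingTerm y w b) :
    HasLeadingTerm (x * y) (v + w) (a * b) where
  orderTop_eq := by rw [HahnSeries.orderTop_mul, hx.orderTop_eq, hy.orderTop_eq, WithTop.coe_add]
  leadingCoeff_eq := by rw [HahnSeries.leadingCoeff_mul, hx.leadingCoeff_eq, hy.leadingCoeff_eq]

lemma pow (hx : HasLeadingTerm x w a) (n : ℕ) : HasLeadingTerm (x ^ n) (n • w) (a ^ n) := by
  have : Nontrivial R := nontrivial_of_ne a 0 hx.ne_zero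
  induction n with
  | zero => simpa only [pow_zero, zero_nsmul] using (⟨HahnSeries.orderTop_one,
      HahnSeries.leadingCoeff_one⟩ : HasLeadingTerm (1 : HahnSeries Γ R) 0 1)
  | succ n ih => simpa only [pow_succ, succ_nsmul] using ih.mul hx

end Mul

end HasLeadingTerm

section PartialSums

variable {Γ R : Type*} [LinearOrder Γ]

/-- The Hahn series `∑ φ k T^(e k)`, summed over all `k : ℕ`; its exponents `e k` may be bounded. -/
noncomputable def hahnSeriesOfStrictMono [Zero R] (φ : ℕ → R) {e : ℕ → Γ} (he : StrictMono e) :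
    HahnSeries Γ R :=
  HahnSeries.embDomain (OrderEmbedding.ofStrictMono e he) ⟨φ, Set.isPWO_of_wellQuasiOrderedLE _⟩

lemma hasLeadingTerm_partialSum_sub [AddCommGroup R] (φ : ℕ → R) {e : ℕ → Γ} (he : StrictMono e)
    {N : ℕ} (hφ : φ N ≠ 0) :
    HasLeadingTerm (∑ k ∈ Finset.range N, HahnSeries.single (e k) (φ k) -
      hahnSeriesOfStrictMono φ he) (e N) (-φ N) := by
  set r := ∑ k ∈ Finset.range N, HahnSeries.single (e k) (φ k) - hahnSeriesOfStrictMono φ he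
    with hr
  have coeff_range (j : ℕ) : r.coeff (e j) = if j < N then 0 else -φ j := by
    have : (hahnSeriesOfStrictMono φ he).coeff (e j) = φ j :=
      HahnSeries.embDomain_coeff (f := OrderEmbedding.ofStrictMono e he)
    rw [hr, HahnSeries.coeff_sub, this, HahnSeries.coeff_sum]
    simp only [HahnSeries.coeff_single, he.injective.eq_iff, Finset.sum_ite_eq, Finset.mem_range]
    split_ifs <;> simp
  have coeff_off_range {v : Γ} (hv : v ∉ Set.range e) : r.coeff v = 0 := by
    have : (hahnSeriesOfStrictMono φ he).coeff v = 0 := HahnSeries.embDomain_of_notMem_range hv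
    rw [hr, HahnSeries.coeff_sub, this, HahnSeries.coeff_sum, sub_zero]
    exact Finset.sum_eq_zero fun k _ => HahnSeries.coeff_single_of_ne fun h => hv ⟨k, h.symm⟩
  have coeff_eN : r.coeff (e N) = -φ N := by rw [coeff_range, if_neg (lt_irrefl N)]
  refine .of_coeff coeff_eN (neg_ne_zero.2 hφ) fun v hv => ?_
  by_cases hve : v ∈ Set.range e
  · obtain ⟨j, rfl⟩ := hve
    rw [coeff_range, if_pos (he.lt_iff_lt.1 hv)]
  · exact coeff_off_range hve

variable [AddCommGroup Γ] [IsOrderedAddMonoid Γ]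

lemma exists_eventually_hasLeadingTerm_eval [Semiring R] [NoZeroDivisors R]
    {ι : Type*} [LinearOrder ι] [Nonempty ι] [NoMaxOrder ι]
    {G : Polynomial (HahnSeries Γ R)} (hG : G ≠ 0) {e : ι → Γ} (he : StrictMono e)
    {x : ι → HahnSeries Γ R} {a : ι → R} (hx : ∀ N, HasLeadingTerm (x N) (e N) (a N)) :
    ∃ (w : Γ) (m : ℕ) (c : R),
      ∀ᶠ N in atTop, HasLeadingTerm (G.eval (x N)) (w + m • e N) (c * a N ^ m) := by
  obtain ⟨m, hm, hmin⟩ := exists_eventually_forall_lt (l := atTop)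
    (Polynomial.support_nonempty.2 hG) (g := fun i N => (G.coeff i).order + i • e N)
    fun i _ j _ hij => eventually_add_nsmul_lt_or_gt he fun h => hij (congrArg Prod.snd h)
  have coeff_ne {i : ℕ} (hi : i ∈ G.support) : G.coeff i ≠ 0 := Polynomial.mem_support_iff.1 hi
  refine ⟨(G.coeff m).order, m, (G.coeff m).leadingCoeff, hmin.mono fun N hN => ?_⟩
  rw [Polynomial.eval_eq_sum, Polynomial.sum]
  exact .sum_of_lt hm
    (fun i hi => (HasLeadingTerm.order_leadingCoeff (coeff_ne hi)).mul ((hx N).pow i)) hN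

lemma exists_eventually_hasLeadingTerm_eval_partialSum [CommRing R] [IsDomain R]
    {G : Polynomial (HahnSeries Γ R)} (hG : G ≠ 0) {φ : ℕ → R} (hφ : ∀ k, φ k ≠ 0)
    {e : ℕ → Γ} (he : StrictMono e) :
    ∃ (w : Γ) (m : ℕ) (c : R), ∀ᶠ N in atTop,
      HasLeadingTerm (G.eval (∑ k ∈ Finset.range N, HahnSeries.single (e k) (φ k)))
        (w + m • e N) (c * (-φ N) ^ m) := by
  have hT : Polynomial.taylor (hahnSeriesOfStrictMono φ he) G ≠ 0 :=
    (Polynomial.taylor_eq_zero _ _).not.2 hG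
  simpa only [Polynomial.taylor_eval_sub] using exists_eventually_hasLeadingTerm_eval hT he
    fun N => hasLeadingTerm_partialSum_sub φ he (hφ N)

end PartialSums

section GeneralizedPolynomials

/-- The inclusion of generalized polynomials `∑ a_γ T^γ` into Hahn series. -/
noncomputable def toHahnSeries (R Γ : Type*) [CommSemiring R] [AddCommMonoid Γ] [PartialOrder Γ]
    [IsOrderedCancelAddMonoid Γ] : AddMonoidAlgebra R Γ →+* HahnSeries Γ R :=
  (AddMonoidAlgebra.lift R (HahnSeries Γ R) Γ
    { toFun := fun γ => HahnSeries.single γ.toAdd 1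
      map_one' := rfl
      map_mul' := fun γ δ => by simp }).toRingHom

section

variable {R Γ : Type*} [CommSemiring R] [AddCommMonoid Γ] [PartialOrder Γ]
  [IsOrderedCancelAddMonoid Γ]

lemma toHahnSeries_single (γ : Γ) (a : R) :
    toHahnSeries R Γ (AddMonoidAlgebra.single γ a) = HahnSeries.single γ a := by
  simp [toHahnSeries, ← HahnSeries.C_mul_eq_smul, HahnSeries.C_apply]

lemma coeff_toHahnSeries (c : AddMonoidAlgebra R Γ) (γ : Γ) :
    (toHahnSeries R Γ c).coeff γ = c.coeff γ := by
  classical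
  induction c using AddMonoidAlgebra.induction_linear with
  | zero => simp
  | add c d hc hd => simp [hc, hd]
  | single δ a =>
    simp [toHahnSeries_single, HahnSeries.coeff_single, Finsupp.single_apply, eq_comm]

lemma toHahnSeries_injective : Function.Injective (toHahnSeries R Γ) := fun c d h => by
  ext γ
  rw [← coeff_toHahnSeries, h, coeff_toHahnSeries]

end

/-- The value of the generalized polynomial `∑ a_γ T^γ` at `T = exp s`. Parametrizing the positive
reals by `exp` makes this a homomorphism for every `s`, and turns `T → 0⁺` into `s → -∞`. -/
noncomputable def evalExp (s : ℝ) : AddMonoidAlgebra ℝ ℝ →ₐ[ℝ] ℝ :=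
  AddMonoidAlgebra.lift ℝ ℝ ℝ
    { toFun := fun γ => Real.exp (s * γ.toAdd)
      map_one' := by simp
      map_mul' := fun γ δ => by simp [mul_add, Real.exp_add] }

lemma evalExp_single (s γ a : ℝ) :
    evalExp s (AddMonoidAlgebra.single γ a) = a * Real.exp (s * γ) := by
  simp [evalExp]

lemma tendsto_exp_mul_atBot_nhds_zero {r : ℝ} (hr : 0 < r) :
    Tendsto (fun s => Real.exp (s * r)) atBot (𝓝 0) :=
  Real.tendsto_exp_atBot.comp (tendsto_id.atBot_mul_const hr)

lemma HasLeadingTerm.tendsto_evalExp_div {c : AddMonoidAlgebra ℝ ℝ} {w a : ℝ}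
    (hc : HasLeadingTerm (toHahnSeries ℝ ℝ c) w a) :
    Tendsto (fun s => evalExp s c / Real.exp (s * w)) atBot (𝓝 a) := by
  classical
  have expand (s : ℝ) : evalExp s c / Real.exp (s * w) =
      ∑ γ ∈ c.coeff.support, c.coeff γ * Real.exp (s * (γ - w)) := by
    simp only [evalExp, AddMonoidAlgebra.lift_apply, Finsupp.sum, Finset.sum_div, mul_sub,
      Real.exp_sub, mul_div_assoc, smul_eq_mul, MonoidHom.coe_mk, OneHom.coe_mk, toAdd_ofAdd]
  have term_tendsto : ∀ γ ∈ c.coeff.support, Tendsto (fun s => c.coeff γ * Real.exp (s * (γ - w)))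
      atBot (𝓝 (if γ = w then c.coeff γ else 0)) := by
    intro γ hγ
    have hwγ : w ≤ γ := by
      rw [← WithTop.coe_le_coe, ← hc.orderTop_eq]
      refine HahnSeries.orderTop_le_of_coeff_ne_zero ?_
      rwa [coeff_toHahnSeries, ← Finsupp.mem_support_iff]
    rcases hwγ.eq_or_lt with rfl | hlt
    · simp
    · simpa [hlt.ne'] using (tendsto_exp_mul_atBot_nhds_zero (sub_pos.2 hlt)).const_mul (c.coeff γ)
  have sum_eq : ∑ γ ∈ c.coeff.support, (if γ = w then c.coeff γ else 0) = a := by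
    rw [← hc.coeff_eq, coeff_toHahnSeries]
    simp +contextual [eq_comm]
  simp only [expand]
  exact sum_eq ▸ tendsto_finsetSum _ term_tendsto

lemma HasLeadingTerm.eq_of_tendsto_evalExp_div {c d : AddMonoidAlgebra ℝ ℝ} {v w a b L : ℝ}
    (hc : HasLeadingTerm (toHahnSeries ℝ ℝ c) v a) (hd : HasLeadingTerm (toHahnSeries ℝ ℝ d) w b)
    (hL : Tendsto (fun s => evalExp s c / evalExp s d) atBot (𝓝 L)) :
    L = if v = w then a / b else 0 := by
  have ratio : Tendsto (fun s => evalExp s c / evalExp s d * Real.exp (s * (w - v))) atBot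
      (𝓝 (a / b)) := by
    refine (hc.tendsto_evalExp_div.div hd.tendsto_evalExp_div hd.ne_zero).congr fun s => ?_
    rw [Pi.div_apply, mul_sub, Real.exp_sub, div_div_div_eq, mul_comm (Real.exp (s * v)),
      mul_div_mul_comm]
  rcases lt_trichotomy v w with hvw | rfl | hvw
  · have ratio_zero := hL.mul (tendsto_exp_mul_atBot_nhds_zero (sub_pos.2 hvw))
    rw [mul_zero] at ratio_zero
    exact absurd (tendsto_nhds_unique ratio ratio_zero) (div_ne_zero hc.ne_zero hd.ne_zero)
  · rw [if_pos rfl]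
    exact tendsto_nhds_unique hL (by simpa using ratio)
  · rw [if_neg hvw.ne']
    have quotient_zero := ratio.mul (tendsto_exp_mul_atBot_nhds_zero (sub_pos.2 hvw))
    rw [mul_zero] at quotient_zero
    refine tendsto_nhds_unique hL (quotient_zero.congr fun s => ?_)
    rw [mul_assoc, ← Real.exp_add, ← mul_add, sub_add_sub_cancel, sub_self, mul_zero, Real.exp_zero,
      mul_one]

end GeneralizedPolynomials

section Curves

/-- The polynomial `p (x₀ + T, y₀ + X)` in `X` over the generalized polynomials in `T`. -/
noncomputable def expandAt (x₀ y₀ : ℝ) :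
    MvPolynomial (Fin 2) ℝ →ₐ[ℝ] Polynomial (AddMonoidAlgebra ℝ ℝ) :=
  MvPolynomial.aeval ![algebraMap ℝ _ x₀ + Polynomial.C (AddMonoidAlgebra.single 1 1),
    algebraMap ℝ _ y₀ + Polynomial.X]

variable (x₀ y₀ : ℝ)

lemma evalExp_eval_expandAt (p : MvPolynomial (Fin 2) ℝ) (ψ : AddMonoidAlgebra ℝ ℝ) (s : ℝ) :
    evalExp s ((expandAt x₀ y₀ p).eval ψ) = pev p (x₀ + Real.exp s, y₀ + evalExp s ψ) := by
  unfold expandAt pev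
  induction p using MvPolynomial.induction_on with
  | C a => simp [Polynomial.algebraMap_apply, evalExp_single]
  | add p q hp hq => simp only [map_add, Polynomial.eval_add, hp, hq]
  | mul_X p i hp =>
    simp only [map_mul, Polynomial.eval_mul, hp]
    fin_cases i <;> simp [Polynomial.algebraMap_apply, evalExp_single]

lemma expandAt_injective : Function.Injective (expandAt x₀ y₀) := by
  refine fun p q hpq => MvPolynomial.funext_set ![Set.Ioi x₀, Set.univ] ?_ fun v hv => ?_
  · intro i
    fin_cases i
    exacts [Set.Ioi_infinite x₀, Set.infinite_univ]
  · have hv₀ : 0 < v 0 - x₀ := sub_pos.2 (hv 0 (Set.mem_univ 0))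
    have hv_eq : v = ![x₀ + Real.exp (Real.log (v 0 - x₀)),
        y₀ + evalExp (Real.log (v 0 - x₀)) (algebraMap ℝ _ (v 1 - y₀))] := by
      ext i
      fin_cases i <;> simp [Real.exp_log hv₀, evalExp_single]
    have h := congrArg (fun P => evalExp (Real.log (v 0 - x₀))
      (P.eval (algebraMap ℝ _ (v 1 - y₀)))) hpq
    simp only [evalExp_eval_expandAt] at h
    rw [hv_eq]
    exact h

/-- The `N`-th partial sum `∑ φ k T^(e k)`, over `k < N`, as a generalized polynomial. -/
noncomputable def partialSum (φ e : ℕ → ℝ) (N : ℕ) : AddMonoidAlgebra ℝ ℝ :=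
  ∑ k ∈ Finset.range N, AddMonoidAlgebra.single (e k) (φ k)

lemma exists_eventually_hasLeadingTerm_expandAt {p : MvPolynomial (Fin 2) ℝ} (hp : p ≠ 0)
    {φ e : ℕ → ℝ} (hφ : ∀ k, φ k ≠ 0) (he : StrictMono e) :
    ∃ (w : ℝ) (m : ℕ) (c : ℝ), ∀ᶠ N in atTop,
      HasLeadingTerm (toHahnSeries ℝ ℝ ((expandAt x₀ y₀ p).eval (partialSum φ e N)))
        (w + m • e N) (c * (-φ N) ^ m) := by
  have hG : (expandAt x₀ y₀ p).map (toHahnSeries ℝ ℝ) ≠ 0 :=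
    (Polynomial.map_ne_zero_iff toHahnSeries_injective).2
      ((map_ne_zero_iff _ (expandAt_injective x₀ y₀)).2 hp)
  have eval_eq (N : ℕ) : toHahnSeries ℝ ℝ ((expandAt x₀ y₀ p).eval (partialSum φ e N)) =
      ((expandAt x₀ y₀ p).map (toHahnSeries ℝ ℝ)).eval
        (∑ k ∈ Finset.range N, HahnSeries.single (e k) (φ k)) := by
    have sum_eq : ∑ k ∈ Finset.range N, HahnSeries.single (e k) (φ k) =
        toHahnSeries ℝ ℝ (partialSum φ e N) := by
      simp [partialSum, toHahnSeries_single]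
    rw [sum_eq, Polynomial.eval_map_apply]
  simpa only [eval_eq] using exists_eventually_hasLeadingTerm_eval_partialSum hG hφ he

variable {x₀ y₀}

lemma tendsto_evalExp_div_expandAt {p q : MvPolynomial (Fin 2) ℝ} {φ e : ℕ → ℝ} {N : ℕ} {L : ℝ}
    (hL : Tendsto (fun x =>
          pev p (x, y₀ + ∑ k ∈ Finset.range N, φ k * |x - x₀| ^ e k) /
          pev q (x, y₀ + ∑ k ∈ Finset.range N, φ k * |x - x₀| ^ e k)) (𝓝[>] x₀) (𝓝 L)) :
    Tendsto (fun s => evalExp s ((expandAt x₀ y₀ p).eval (partialSum φ e N)) /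
      evalExp s ((expandAt x₀ y₀ q).eval (partialSum φ e N))) atBot (𝓝 L) := by
  have hexp : Tendsto (fun s => x₀ + Real.exp s) atBot (𝓝[>] x₀) := by
    refine tendsto_nhdsWithin_iff.2 ⟨?_, .of_forall fun s => by simp [Real.exp_pos]⟩
    simpa using Real.tendsto_exp_atBot.const_add x₀
  refine (hL.comp hexp).congr fun s => ?_
  simp only [Function.comp_apply, evalExp_eval_expandAt, partialSum, map_sum, evalExp_single,
    add_sub_cancel_left, Real.abs_exp, Real.exp_mul]

end Curves

theorem partial_sum_curve_limits_converge_general (p q : MvPolynomial (Fin 2) ℝ) (hq : q ≠ 0)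
    (x₀ y₀ : ℝ) (φ e : ℕ → ℝ) (hφ : ∀ k, φ k ≠ 0) (he : StrictMono e) (L : ℕ → ℝ)
    (hL : ∀ᶠ N in atTop,
      Tendsto (fun x =>
          pev p (x, y₀ + ∑ k ∈ Finset.range N, φ k * |x - x₀| ^ e k) /
          pev q (x, y₀ + ∑ k ∈ Finset.range N, φ k * |x - x₀| ^ e k))
        (𝓝[>] x₀) (𝓝 (L N))) :
    ∃ l : ℝ, ∀ᶠ N in atTop, L N = l := by
  rcases eq_or_ne p 0 with rfl | hp
  · refine ⟨0, hL.mono fun N hN => tendsto_nhds_unique hN ?_⟩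
    simp [pev]
  obtain ⟨u, m, c, hpN⟩ := exists_eventually_hasLeadingTerm_expandAt x₀ y₀ hp hφ he
  obtain ⟨v, n, d, hqN⟩ := exists_eventually_hasLeadingTerm_expandAt x₀ y₀ hq hφ he
  have limit_eq : ∀ᶠ N in atTop, L N =
      if u + m • e N = v + n • e N then c * (-φ N) ^ m / (d * (-φ N) ^ n) else 0 := by
    filter_upwards [hL, hpN, hqN] with N hLN hpN hqN
    exact hpN.eq_of_tendsto_evalExp_div hqN (tendsto_evalExp_div_expandAt hLN)
  by_cases h : (u, m) = (v, n)
  · obtain ⟨rfl, rfl⟩ := Prod.mk.inj h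
    refine ⟨c / d, limit_eq.mono fun N hN => ?_⟩
    rw [hN, if_pos rfl, mul_div_mul_right _ _ (pow_ne_zero m (neg_ne_zero.2 (hφ N)))]
  · have orders_ne : ∀ᶠ N in atTop, u + m • e N ≠ v + n • e N :=
      (eventually_add_nsmul_lt_or_gt he h).elim
        (·.mono fun _ => ne_of_lt) (·.mono fun _ => ne_of_gt)
    refine ⟨0, ?_⟩
    filter_upwards [limit_eq, orders_ne] with N hN hne
    rw [hN, if_neg hne]

/-- If `L N` is the right-sided limit of a bounded rational function along the `N`-th
partial sum curve of a series of type (ii), then the sequence `(L N)` converges. -/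
theorem partial_sum_curve_limits_converge (p q : MvPolynomial (Fin 2) ℝ) (hq : q ≠ 0)
    (hcop : ∀ d : MvPolynomial (Fin 2) ℝ, d ∣ p → d ∣ q → IsUnit d) (x₀ y₀ : ℝ)
    (hb : BoundedNear p q (x₀, y₀))
    (φ : ℕ → ℝ) (e : ℕ → ℚ) (hφ : ∀ k, φ k ≠ 0) (he : StrictMono e) (h1 : 1 ≤ e 0)
    (L : ℕ → ℝ)
    (hL : ∀ N : ℕ, 1 ≤ N →
      Tendsto (fun x =>
          pev p (x, y₀ + ∑ k ∈ Finset.range N, φ k * |x - x₀| ^ ((e k : ℝ))) /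
          pev q (x, y₀ + ∑ k ∈ Finset.range N, φ k * |x - x₀| ^ ((e k : ℝ))))
        (𝓝[>] x₀) (𝓝 (L N))) :
    ∃ l : ℝ, Tendsto L atTop (𝓝 l) := by
  obtain ⟨l, hl⟩ := partial_sum_curve_limits_converge_general p q hq x₀ y₀ φ (fun k => e k) hφ
    (Rat.cast_strictMono.comp he) L ((eventually_ge_atTop 1).mono hL)
  exact ⟨l, tendsto_const_nhds.congr' (hl.mono fun _ h => h.symm)⟩
end
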